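/- arXiv:2203.16186 — 6 statements merged into one kernel-verified Lean document; each statement's English description precedes it below -/
import Mathlib

section
/- Let T be a tree on n ≥ 4 vertices with diam(T) = 2d+1 for some positive integer d. Then the rank of the eccentricity matrix 𝓔(T) is 4. -/
open SimpleGraph Finset Matrix Polynomial

/-- The eccentricity of a vertex: the greatest distance from `u` to any vertex. -/
noncomputable def ecc {V : Type*} [Fintype V] (G : SimpleGraph V) (u : V) : ℕ :=
  Finset.univ.sup fun v => G.dist u v

/-- The diameter of a graph: the greatest distance between any pair of vertices. -/
noncomputable def gdiam {V : Type*} [Fintype V] (G : SimpleGraph V) : ℕ :=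
  Finset.univ.sup fun p : V × V => G.dist p.1 p.2

/-- The eccentricity matrix: `(u,v)` entry is `d(u,v)` if `d(u,v) = min (e u) (e v)`,
and `0` otherwise. -/
noncomputable def eccMatrix {V : Type*} [Fintype V] (G : SimpleGraph V) : Matrix V V ℝ :=
  Matrix.of fun u v =>
    if G.dist u v = min (ecc G u) (ecc G v) then (G.dist u v : ℝ) else 0

lemma aux_cross {V : Type*} {T : SimpleGraph V} (hT : T.IsTree) {a b u v : V} (hab : T.Adj a b)
    (hu : T.dist u a < T.dist u b) (hv : T.dist v b < T.dist v a) :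
    T.dist u v = T.dist u a + 1 + T.dist v b := by
  classical
  have hc := hT.connected
  obtain ⟨p, hp, hpl⟩ := hc.exists_path_of_dist u a
  obtain ⟨q, hq, hql⟩ := hc.exists_path_of_dist b v
  obtain ⟨r, hr, hrl⟩ := hc.exists_path_of_dist u v
  have side : ∀ (u a b w : V) (p : T.Walk u a), p.length = T.dist u a →
      T.dist u a < T.dist u b → w ∈ p.support → T.dist w a < T.dist w b := by
    intro u a b w p hpl hu hw
    have h1 := congrArg Walk.length (p.take_spec hw)
    rw [Walk.length_append] at h1
    have h2 := dist_le (p.takeUntil w hw)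
    have h3 := dist_le (p.dropUntil w hw)
    have h4 := hc.dist_triangle (u := u) (v := w) (w := b)
    omega
  have hpath : (p.append (Walk.cons hab q)).IsPath := by
    rw [Walk.isPath_def, Walk.support_append, Walk.support_cons, List.tail_cons,
      List.nodup_append]
    refine ⟨(Walk.isPath_def _).1 hp, (Walk.isPath_def _).1 hq, ?_⟩
    rintro w hw w' hw' rfl
    have h1 := side u a b w p hpl hu hw
    have h2 := side v b a w q.reverse (by rw [Walk.length_reverse, hql, dist_comm]) hv
      (by simpa using hw')
    omega
  have := hT.isAcyclic.path_unique ⟨r, hr⟩ ⟨_, hpath⟩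
  have := congrArg (fun z : T.Path u v => z.1.length) this
  simp only [Walk.length_append, Walk.length_cons] at this
  rw [T.dist_comm (u := v)]
  omega

lemma aux_rank {V : Type*} [Fintype V] (E : Matrix V V ℝ) (s : V → Prop) (a : V → ℕ) (d : ℕ)
    (hd : 1 ≤ d) (h0 : ∀ u v, (s u ↔ s v) → E u v = 0)
    (h1 : ∀ u v, ¬ (s u ↔ s v) → E u v =
      if a u = d then (a v + 1 + d : ℝ) else if a v = d then (a u + 1 + d : ℝ) else 0)
    (x c y e : V) (hx : s x) (hc : s c) (hy : ¬ s y) (he : ¬ s e)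
    (ax : a x = d) (ac : a c = 0) (ay : a y = d) (ae : a e = 0) : E.rank = 4 := by
  classical
  apply le_antisymm
  · let S : V → ℝ := fun u => if s u then 1 else 0
    let p : V → ℝ := fun u => if a u = d then 1 else 0
    let f : V → ℝ := fun u => a u + 1 + d
    let P : Matrix V (Fin 4) ℝ := Matrix.of fun u =>
      ![S u * p u, S u * (1 - p u) * f u, (1 - S u) * p u, (1 - S u) * (1 - p u) * f u]
    let Q : Matrix (Fin 4) V ℝ := (Matrix.of fun u =>
      ![(1 - S u) * f u, (1 - S u) * p u, S u * f u, S u * p u])ᵀ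
    have hE : E = P * Q := by
      ext u v
      rw [Matrix.mul_apply, Fin.sum_univ_four]
      by_cases hu : s u <;> by_cases hv : s v
      · rw [h0 u v (by tauto)]; simp [P, Q, S, hu, hv]
      · rw [h1 u v (by tauto)]; simp [P, Q, S, p, f, hu, hv]
        split_ifs <;> simp
      · rw [h1 u v (by tauto)]; simp [P, Q, S, p, f, hu, hv]
        split_ifs <;> simp
      · rw [h0 u v (by tauto)]; simp [P, Q, S, hu, hv]
    rw [hE]
    exact (rank_mul_le_right P Q).trans ((rank_le_card_height Q).trans (by simp))
  · have hsub := rank_submatrix_le E ![x, c, y, e] ![y, e, x, c]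
    have hM : E.submatrix ![x, c, y, e] ![y, e, x, c] =
        !![2 * (d : ℝ) + 1, (d : ℝ) + 1, 0, 0; (d : ℝ) + 1, 0, 0, 0;
          0, 0, 2 * (d : ℝ) + 1, (d : ℝ) + 1; 0, 0, (d : ℝ) + 1, 0] := by
      have hd' : (0 : ℕ) ≠ d := by omega
      ext i j
      fin_cases i <;> fin_cases j <;>
        simp [h0, h1, hx, hc, hy, he, ax, ac, ay, ae, hd'] <;> ring
    have hdet : (E.submatrix ![x, c, y, e] ![y, e, x, c]).det = ((d : ℝ) + 1) ^ 4 := by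
      rw [hM]
      simp [Matrix.det_succ_row_zero, Fin.sum_univ_succ, Fin.succAbove]
      ring
    have hu : IsUnit (E.submatrix ![x, c, y, e] ![y, e, x, c]) := by
      rw [Matrix.isUnit_iff_isUnit_det, hdet, isUnit_iff_ne_zero]
      positivity
    rw [rank_of_isUnit _ hu] at hsub
    simpa using hsub

/-- A tree on `n ≥ 4` vertices with odd diameter `2d+1` has eccentricity matrix of rank `4`. -/
theorem stmt1 {V : Type*} [Fintype V] [DecidableEq V] (T : SimpleGraph V) (n d : ℕ)
    (hT : T.IsTree) (hn : Fintype.card V = n) (h4 : 4 ≤ n) (hd : 1 ≤ d)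
    (hdiam : gdiam T = 2*d + 1) :
    (eccMatrix T).rank = 4 := by
  have hc := hT.connected
  have hle : ∀ u v, T.dist u v ≤ 2 * d + 1 := fun u v => by
    rw [← hdiam]
    exact Finset.le_sup (f := fun p : V × V => T.dist p.1 p.2) (Finset.mem_univ (u, v))
  obtain ⟨x, y, hxy⟩ : ∃ x y, T.dist x y = 2 * d + 1 := by
    by_contra! hne
    have : gdiam T ≤ 2 * d := Finset.sup_le fun p _ => by
      have := hle p.1 p.2
      have := hne p.1 p.2
      omega
    omega
  obtain ⟨p, hp⟩ := hc.exists_walk_length_eq_dist x y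
  obtain ⟨c, e, hce, hxc, hey⟩ : ∃ c e, T.Adj c e ∧ T.dist x c ≤ d ∧ T.dist e y ≤ d := by
    refine ⟨p.getVert d, p.getVert (d + 1), p.adj_getVert_succ (by omega), ?_, ?_⟩
    · exact (dist_le (p.take d)).trans (by simp)
    · exact (dist_le (p.drop (d + 1))).trans (by simp; omega)
  have hce1 : T.dist c e = 1 := dist_eq_one_iff_adj.2 hce
  have t1 := hc.dist_triangle (u := x) (v := c) (w := y)
  have t2 := hc.dist_triangle (u := c) (v := e) (w := y)
  have t3 := hc.dist_triangle (u := x) (v := e) (w := y)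
  have t4 := hc.dist_triangle (u := x) (v := c) (w := e)
  have hye := T.dist_comm (u := y) (v := e)
  have hyc := T.dist_comm (u := y) (v := c)
  have hec := T.dist_comm (u := e) (v := c)
  have hne := fun u => hT.dist_ne_of_adj u hce
  let s : V → Prop := fun u => T.dist u c < T.dist u e
  let a : V → ℕ := fun u => min (T.dist u c) (T.dist u e)
  have hcross : ∀ u v, s u → ¬ s v → T.dist u v = a u + a v + 1 := by
    intro u v hu hv
    have := hne v
    have := aux_cross hT hce (u := u) (v := v) hu (by simp only [s] at hv; omega)
    simp only [s, a] at *
    omega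
  have hsx : s x := by simp only [s]; omega
  have hsc : s c := by simp only [s, dist_self]; omega
  have hsy : ¬ s y := by simp only [s]; omega
  have hse : ¬ s e := by simp only [s, dist_self]; omega
  have hax : a x = d := by simp only [a]; omega
  have hac : a c = 0 := by simp [a]
  have hay : a y = d := by simp only [a]; omega
  have hae : a e = 0 := by simp [a]
  have had : ∀ u, a u ≤ d := by
    intro u
    by_cases hu : s u
    · have := hcross u y hu hsy
      have := hle u y
      omega
    · have := hcross x u hsx hu
      have := hle x u
      omega
  have hsame : ∀ u v, (s u ↔ s v) → T.dist u v ≤ a u + a v := by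
    intro u v huv
    have h1 := hc.dist_triangle (u := u) (v := c) (w := v)
    have h2 := hc.dist_triangle (u := u) (v := e) (w := v)
    rw [T.dist_comm (u := c)] at h1
    rw [T.dist_comm (u := e)] at h2
    simp only [s, a] at *
    omega
  have hcross' : ∀ u v, ¬ (s u ↔ s v) → T.dist u v = a u + a v + 1 := by
    intro u v h
    by_cases hu : s u
    · exact hcross u v hu (by tauto)
    · rw [T.dist_comm, hcross v u (by tauto) hu]; omega
  have hecc : ∀ u, ecc T u = a u + d + 1 := by
    intro u
    apply le_antisymm
    · refine Finset.sup_le fun v _ => ?_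
      have := had v
      by_cases h : s u ↔ s v
      · have := hsame u v h; omega
      · have := hcross' u v h; omega
    · have key : ∀ v, T.dist u v ≤ ecc T u := fun v =>
        Finset.le_sup (f := fun v => T.dist u v) (Finset.mem_univ v)
      by_cases hu : s u
      · have := key y
        rw [hcross' u y (by tauto), hay] at this; exact this
      · have := key x
        rw [hcross' u x (by tauto), hax] at this; exact this
  refine aux_rank (eccMatrix T) s a d hd ?_ ?_ x c y e hsx hsc hsy hse hax hac hay hae
  · intro u v h
    have := hsame u v h
    have := had u
    have := had v
    simp only [eccMatrix, Matrix.of_apply, hecc]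
    rw [if_neg (by omega)]
  · intro u v h
    have h2 := had u
    have h3 := had v
    simp only [eccMatrix, Matrix.of_apply, hecc, hcross' u v h]
    by_cases hu : a u = d
    · rw [if_pos (by omega), if_pos hu, hu]; push_cast; ring
    · by_cases hv : a v = d
      · rw [if_pos (by omega), if_neg hu, if_pos hv, hv]; push_cast; ring
      · rw [if_neg (by omega), if_neg hu, if_neg hv]
end

section
/- Let T be a tree on n vertices with diam(T) = 2d for an integer d ≥ 2, let u₀ be the center of T, and let u₁, …, u_l (l ≥ 2) be exactly those neighbours of u₀ such that e_{T_i}(u_i) = d−1, where T_i is the component of T − (⋃_{i=1}^l {u₀, u_i}) containing u_i. Then the rank of the eccentricity matrix 𝓔(T) equals 2l. -/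
open SimpleGraph Finset Matrix Polynomial

open Classical in
/-- The eccentricity of `u` within its connected component of `G`. -/
noncomputable def eccWithin {V : Type*} [Fintype V] (G : SimpleGraph V) (u : V) : ℕ :=
  Finset.univ.sup fun v => if G.Reachable u v then G.dist u v else 0

/-- For a neighbour `v` of `u₀`, the eccentricity of `v` within the component containing `v`
of the graph obtained from `T` by deleting the edge `u₀v`. -/
noncomputable def branchEcc {V : Type*} [Fintype V] [DecidableEq V]
    (T : SimpleGraph V) (u₀ v : V) : ℕ :=
  eccWithin (T.deleteEdges {s(u₀, v)}) v

open Classical in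
theorem rank_abs {V : Type*} [Fintype V] (E : Matrix V V ℝ) (l d : ℕ) (hd : 2 ≤ d) (hl : 2 ≤ l)
    (h : V → ℕ) (B : Fin l → V → Prop) (hle : ∀ x, h x ≤ d)
    (hD : ∀ x, h x = d → ∃ i, B i x) (huniq : ∀ i j x, B i x → B j x → i = j)
    (hsymm : ∀ x y, E x y = E y x)
    (hE1 : ∀ x y i, h x = d → B i x → E x y = if B i y then 0 else (d : ℝ) + h y)
    (hE2 : ∀ x y, h x < d → h y < d → E x y = 0)
    (u w : Fin l → V) (hu : ∀ i, B i (u i)) (hu1 : ∀ i, h (u i) = 1)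
    (hw : ∀ i, B i (w i)) (hw1 : ∀ i, h (w i) = d) : E.rank = 2 * l := by
  apply le_antisymm
  · let A : Matrix V (Fin l ⊕ Fin l) ℝ := fun x s => Sum.elim
      (fun i => if h x = d ∧ B i x then 1 else 0)
      (fun i => if h x = d ∨ B i x then 0 else (d : ℝ) + h x) s
    let C : Matrix (Fin l ⊕ Fin l) V ℝ := fun s x => Sum.elim
      (fun i => if B i x then 0 else (d : ℝ) + h x)
      (fun i => if h x = d ∧ B i x then 1 else 0) s
    have hAC : E = A * C := by
      ext x y
      rw [Matrix.mul_apply, Fintype.sum_sum_type]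
      simp only [A, C, Sum.elim_inl, Sum.elim_inr]
      by_cases hx : h x = d
      · obtain ⟨i, hi⟩ := hD x hx
        rw [hE1 x y i hx hi]
        have : ∀ j, B j x ↔ j = i := fun j => ⟨fun hj => huniq _ _ _ hj hi, fun e => e ▸ hi⟩
        rw [Finset.sum_eq_single i]
        · simp [hx, this]
        · intro j _ hj
          simp [hx, this, hj]
        · simp
      · by_cases hy : h y = d
        · obtain ⟨i, hi⟩ := hD y hy
          have : ∀ j, B j y ↔ j = i := fun j => ⟨fun hj => huniq _ _ _ hj hi, fun e => e ▸ hi⟩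
          rw [hsymm, hE1 y x i hy hi]
          simp [hx, hy, this]
        · rw [hE2 x y (lt_of_le_of_ne (hle x) hx) (lt_of_le_of_ne (hle y) hy)]
          simp [hx, hy]
    rw [hAC]
    calc _ ≤ A.rank := Matrix.rank_mul_le_left _ _
      _ ≤ Fintype.card (Fin l ⊕ Fin l) := Matrix.rank_le_card_width _
      _ = 2 * l := by simp; ring
  · let f : Fin l ⊕ Fin l → V := Sum.elim u w
    have hBu : ∀ i j, B i (u j) ↔ i = j := fun i j =>
      ⟨fun hj => huniq _ _ _ hj (hu j), fun e => e ▸ hu i⟩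
    have hBw : ∀ i j, B i (w j) ↔ i = j := fun i j =>
      ⟨fun hj => huniq _ _ _ hj (hw j), fun e => e ▸ hw i⟩
    have key : ∀ (c : ℝ) (p : Fin l → ℝ), c ≠ 0 →
        (∀ i, ∑ j, (if i = j then 0 else c) * p j = 0) → ∀ i, p i = 0 := by
      intro c p hc hp
      have h1 : ∀ i, p i = ∑ j, p j := by
        intro i
        have h2 := hp i
        have h3 : ∑ j, (if i = j then 0 else c) * p j = c * (∑ j, p j - p i) := by
          have : ∀ j, (if i = j then 0 else c) * p j = c * p j - (if i = j then c * p j else 0) := by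
            intro j; split_ifs <;> ring
          simp only [this, Finset.sum_sub_distrib, Finset.sum_ite_eq, Finset.mem_univ, if_true,
            ← Finset.mul_sum]
          ring
        rw [h3] at h2
        rcases mul_eq_zero.1 h2 with h | h
        · exact absurd h hc
        · linarith
      have h4 : ∑ j, p j = l * ∑ j, p j := by
        conv_lhs => rw [Finset.sum_congr rfl (fun i _ => h1 i)]
        simp
      have h5 : (2 : ℝ) ≤ l := by exact_mod_cast hl
      have h6 : ((l : ℝ) - 1) * ∑ j, p j = 0 := by linarith
      rcases mul_eq_zero.1 h6 with h | h
      · linarith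
      · intro i; rw [h1 i, h]
    have hdet : (E.submatrix f f).det ≠ 0 := by
      intro h0
      obtain ⟨v, hv, hv0⟩ := Matrix.exists_mulVec_eq_zero_iff.2 h0
      apply hv
      have hd0 : (d : ℝ) + 1 ≠ 0 := by positivity
      have e1 : ∀ i, v (Sum.inr i) = 0 := by
        apply key ((d : ℝ) + 1) _ hd0
        intro i
        have := congrFun hv0 (Sum.inl i)
        simp only [Matrix.mulVec, dotProduct, Fintype.sum_sum_type, Matrix.submatrix_apply, f,
          Sum.elim_inl, Sum.elim_inr, Pi.zero_apply] at this
        refine Eq.trans ?_ this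
        have a1 : ∀ j, E (u i) (u j) = 0 := fun j => hE2 _ _ (by rw [hu1]; omega) (by rw [hu1]; omega)
        have a2 : ∀ j, E (u i) (w j) = if i = j then 0 else (d : ℝ) + 1 := by
          intro j
          rw [hsymm, hE1 _ _ j (hw1 j) (hw j)]
          simp [hBu, hu1, eq_comm]
        simp [a1, a2]
      have e2 : ∀ i, v (Sum.inl i) = 0 := by
        apply key ((d : ℝ) + 1) _ hd0
        intro i
        have := congrFun hv0 (Sum.inr i)
        simp only [Matrix.mulVec, dotProduct, Fintype.sum_sum_type, Matrix.submatrix_apply, f,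
          Sum.elim_inl, Sum.elim_inr, Pi.zero_apply] at this
        refine Eq.trans ?_ this
        have a2 : ∀ j, E (w i) (u j) = if i = j then 0 else (d : ℝ) + 1 := by
          intro j
          rw [hE1 _ _ i (hw1 i) (hw i)]
          simp [hBu, hu1]
        simp [a2, e1]
      ext s
      rcases s with i | i
      · exact e2 i
      · exact e1 i
    have := Matrix.rank_of_det_ne_zero hdet
    have h2 := Matrix.rank_submatrix_le E f f
    rw [this] at h2
    simp at h2
    omega

theorem sup_attained {V : Type*} [Fintype V] (a : V) (f : V → ℕ) {k : ℕ}
    (hk : Finset.univ.sup f = k) : ∃ x, f x = k := by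
  obtain ⟨x, -, hx⟩ := Finset.exists_mem_eq_sup Finset.univ ⟨a, Finset.mem_univ _⟩ f
  exact ⟨x, by rw [← hx, hk]⟩

theorem geo_mem {V : Type*} (T : SimpleGraph V) (hc : T.Connected) {x y z : V}
    (p : T.Walk x y) (hp : p.length = T.dist x y) (hz : z ∈ p.support) :
    T.dist x y = T.dist x z + T.dist z y := by
  classical
  have h1 := congrArg Walk.length (p.take_spec hz)
  rw [Walk.length_append] at h1
  have h2 := T.dist_le (p.takeUntil z hz)
  have h3 := T.dist_le (p.dropUntil z hz)
  have h4 := hc.dist_triangle (u := x) (v := z) (w := y)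
  omega

theorem dist_of_sep {V : Type*} (T : SimpleGraph V) (hc : T.Connected) {a b x y : V}
    (h : ¬ (T.deleteEdges {s(a, b)}).Reachable x y) :
    T.dist x y = T.dist x a + T.dist a y ∧ T.dist x y = T.dist x b + T.dist b y := by
  obtain ⟨p, hp⟩ := hc.exists_walk_length_eq_dist x y
  have he : s(a, b) ∈ p.edges := by
    by_contra hne
    exact h (reachable_deleteEdges_iff_exists_walk.2 ⟨p, hne⟩)
  exact ⟨geo_mem T hc p hp (Walk.fst_mem_support_of_mem_edges _ he),
    geo_mem T hc p hp (Walk.snd_mem_support_of_mem_edges _ he)⟩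

theorem branch_dist {V : Type*} (T : SimpleGraph V) (hT : T.IsTree) {a v x : V}
    (hav : T.Adj a v) (h : (T.deleteEdges {s(a, v)}).Reachable v x) :
    T.dist a x = T.dist v x + 1 ∧ (T.deleteEdges {s(a, v)}).dist v x = T.dist v x := by
  have hc := hT.connected
  have hb : ¬ (T.deleteEdges {s(a, v)}).Reachable a v :=
    isAcyclic_iff_forall_adj_isBridge.1 hT.isAcyclic hav
  have h1 : T.dist a x = T.dist v x + 1 := by
    have := (dist_of_sep T hc (x := a) (y := x) (a := a) (b := v)
      (fun hr => hb (hr.trans h.symm))).2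
    have h2 := dist_eq_one_iff_adj.2 hav
    omega
  refine ⟨h1, le_antisymm ?_ ?_⟩
  · obtain ⟨p, hp⟩ := hc.exists_walk_length_eq_dist v x
    have he : ∀ e ∈ p.edges, e ∉ ({s(a, v)} : Set (Sym2 V)) := by
      intro e he hm
      rw [Set.mem_singleton_iff] at hm
      subst hm
      have := geo_mem T hc p hp (Walk.fst_mem_support_of_mem_edges _ he)
      omega
    have := (T.deleteEdges {s(a, v)}).dist_le (p.toDeleteEdges _ he)
    have h3 : (p.toDeleteEdges _ he).length = p.length := by simp [Walk.toDeleteEdges]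
    omega
  · exact h.dist_anti (deleteEdges_le _)

theorem exists_branch {V : Type*} (T : SimpleGraph V) (hc : T.Connected) {a x : V}
    (hne : T.dist a x ≠ 0) : ∃ v, T.Adj a v ∧ (T.deleteEdges {s(a, v)}).Reachable v x := by
  obtain ⟨p, hp⟩ := hc.exists_walk_length_eq_dist a x
  cases p with
  | nil => simp at hne
  | @cons _ v _ hav q =>
    refine ⟨v, hav, ?_⟩
    by_contra hn
    have h1 := (dist_of_sep T hc hn).1
    have h2 := T.dist_le q
    simp at hp
    have h3 := dist_eq_one_iff_adj.2 hav.symm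
    omega

/-- For a tree with even diameter `2d`, centre `u₀` and `u₁, …, u_l` exactly the neighbours of
`u₀` whose branch has eccentricity `d-1` (the diametrically distinguished vertices), the rank of
the eccentricity matrix is `2l`. -/
theorem stmt3 {V : Type*} [Fintype V] [DecidableEq V] (T : SimpleGraph V) (n d l : ℕ)
    (hT : T.IsTree) (hn : Fintype.card V = n) (hd : 2 ≤ d) (hdiam : gdiam T = 2*d)
    (u₀ : V) (hcen : ecc T u₀ = d)
    (hl : 2 ≤ l) (u : Fin l → V) (hinj : Function.Injective u)
    (hadj : ∀ i : Fin l, T.Adj u₀ (u i))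
    (hbranch : ∀ i : Fin l, branchEcc T u₀ (u i) = d - 1)
    (hexact : ∀ v : V, T.Adj u₀ v → branchEcc T u₀ v = d - 1 → ∃ i : Fin l, v = u i) :
    (eccMatrix T).rank = 2*l := by
  classical
  have hc := hT.connected
  have hle : ∀ x, T.dist u₀ x ≤ d := by
    intro x
    rw [← hcen]
    exact Finset.le_sup (f := fun v => T.dist u₀ v) (Finset.mem_univ x)
  let B : Fin l → V → Prop := fun i x => (T.deleteEdges {s(u₀, u i)}).Reachable (u i) x
  have hBu : ∀ i, B i (u i) := fun i => Reachable.refl _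
  have hu1 : ∀ i, T.dist u₀ (u i) = 1 := fun i => dist_eq_one_iff_adj.2 (hadj i)
  have hBd : ∀ i x, B i x → T.dist u₀ x = T.dist (u i) x + 1 := fun i x hx =>
    (branch_dist T hT (hadj i) hx).1
  have hsep : ∀ i x y, B i x → ¬ B i y → T.dist x y = T.dist u₀ x + T.dist u₀ y := by
    intro i x y hx hy
    have := (dist_of_sep T hc (a := u₀) (b := u i) (x := x) (y := y)
      (fun hr => hy (Reachable.trans hx hr))).1
    rw [this, T.dist_comm (u := x)]
  have hin : ∀ i x y, B i x → B i y → T.dist x y + 2 ≤ T.dist u₀ x + T.dist u₀ y := by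
    intro i x y hx hy
    have h1 := hBd i x hx
    have h2 := hBd i y hy
    have h3 := hc.dist_triangle (u := x) (v := u i) (w := y)
    rw [T.dist_comm (u := x) (v := u i)] at h3
    omega
  have huniq : ∀ i j x, B i x → B j x → i = j := by
    intro i j x hi hj
    by_contra hij
    have h1 : ¬ B i (u j) := by
      intro h
      have h2 := hBd i _ h
      rw [hu1] at h2
      have h3 : T.dist (u i) (u j) = 0 := by omega
      exact hij (hinj (hc.dist_eq_zero_iff.1 h3))
    have h4 := hsep i x (u j) hi h1
    have h5 := hBd j x hj
    rw [T.dist_comm, hu1] at h4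
    omega
  have hD : ∀ x, T.dist u₀ x = d → ∃ i, B i x := by
    intro x hx
    obtain ⟨v, hav, hr⟩ := exists_branch T hc (a := u₀) (x := x) (by omega)
    have hb : branchEcc T u₀ v = d - 1 := by
      unfold branchEcc eccWithin
      apply le_antisymm
      · apply Finset.sup_le
        intro y _
        split_ifs with h
        · obtain ⟨h1, h2⟩ := branch_dist T hT hav h
          have := hle y
          omega
        · omega
      · obtain ⟨h1, h2⟩ := branch_dist T hT hav hr
        refine le_trans ?_ (Finset.le_sup (Finset.mem_univ x))
        simp only [hr, if_true]
        omega
    obtain ⟨i, rfl⟩ := hexact v hav hb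
    exact ⟨i, hr⟩
  have hW : ∀ i, ∃ x, B i x ∧ T.dist u₀ x = d := by
    intro i
    have hb := hbranch i
    unfold branchEcc eccWithin at hb
    obtain ⟨x, hx⟩ := sup_attained u₀ _ hb
    split_ifs at hx with h
    · obtain ⟨h1, h2⟩ := branch_dist T hT (hadj i) h
      exact ⟨x, h, by omega⟩
    · omega
  choose w hw hw1 using hW
  have htri : ∀ x y, T.dist x y ≤ T.dist u₀ x + T.dist u₀ y := by
    intro x y
    have := hc.dist_triangle (u := x) (v := u₀) (w := y)
    rwa [T.dist_comm (u := x) (v := u₀)] at this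
  have hecc : ∀ x, ecc T x = d + T.dist u₀ x := by
    intro x
    apply le_antisymm
    · apply Finset.sup_le
      intro y _
      have := htri x y
      have := hle y
      omega
    · have : ∃ i, ¬ B i x := by
        by_contra hcon
        push Not at hcon
        have := huniq ⟨0, by omega⟩ ⟨1, by omega⟩ x (hcon _) (hcon _)
        simp at this
      obtain ⟨i, hi⟩ := this
      have h1 := hsep i (w i) x (hw i) hi
      have h2 := Finset.le_sup (f := fun v => T.dist x v) (Finset.mem_univ (w i))
      rw [hw1, T.dist_comm] at h1
      rw [← h1]
      exact h2
  refine rank_abs (eccMatrix T) l d hd hl (fun x => T.dist u₀ x) B hle hD huniq ?_ ?_ ?_ u w hBu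
    hu1 hw hw1
  · intro x y
    simp only [eccMatrix, Matrix.of_apply]
    rw [T.dist_comm (u := x), min_comm]
  · intro x y i hx hi
    change T.dist u₀ x = d at hx
    simp only [eccMatrix, Matrix.of_apply, hecc, hx]
    have hy := hle y
    by_cases h : B i y
    · have := hin i x y hi h
      rw [if_neg (by omega), if_pos h]
    · have := hsep i x y hi h
      rw [if_pos (by omega), if_neg h, this, hx]
      push_cast
      ring
  · intro x y hx hy
    change T.dist u₀ x < d at hx
    change T.dist u₀ y < d at hy
    simp only [eccMatrix, Matrix.of_apply, hecc]
    have := htri x y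
    rw [if_neg (by omega)]
end

section
/- Let T be a tree on n vertices with diam(T) = 2d for an integer d ≥ 2, let u₀ be the center of T, and let u₁, …, u_l (l ≥ 2) be exactly those neighbours of u₀ such that e_{T_i}(u_i) = d−1, where T_i is the component of T − (⋃_{i=1}^l {u₀, u_i}) containing u_i. Then the inertia of 𝓔(T) is (l, l, n−2l), i.e., 𝓔(T) has exactly l positive eigenvalues, l negative eigenvalues, and n−2l zero eigenvalues. -/
open SimpleGraph Finset Matrix Polynomial

/-- The number of positive eigenvalues (with multiplicity) of a real matrix,
counted as roots of the characteristic polynomial. -/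
noncomputable def posEigs {m : Type*} [Fintype m] [DecidableEq m] (M : Matrix m m ℝ) : ℕ :=
  Multiset.card (M.charpoly.roots.filter fun x => 0 < x)

/-- The number of negative eigenvalues (with multiplicity). -/
noncomputable def negEigs {m : Type*} [Fintype m] [DecidableEq m] (M : Matrix m m ℝ) : ℕ :=
  Multiset.card (M.charpoly.roots.filter fun x => x < 0)

/-- The number of zero eigenvalues (with multiplicity). -/
noncomputable def zeroEigs {m : Type*} [Fintype m] [DecidableEq m] (M : Matrix m m ℝ) : ℕ :=
  Multiset.card (M.charpoly.roots.filter fun x => x = 0)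

lemma quad_eigen {m : Type*} [Fintype m] [DecidableEq m] {M : Matrix m m ℝ}
    (hM : M.IsHermitian) (x : m → ℝ) :
    x ⬝ᵥ (M *ᵥ x) = ∑ i, hM.eigenvalues i *
      (((hM.eigenvectorUnitary : Matrix m m ℝ)ᵀ *ᵥ x) i) ^ 2 := by
  have h := hM.spectral_theorem
  rw [Unitary.conjStarAlgAut_apply] at h
  set U : Matrix m m ℝ := (hM.eigenvectorUnitary : Matrix m m ℝ) with hU
  have h2 : M = U * diagonal hM.eigenvalues * Uᵀ := by
    exact h
  have : x ⬝ᵥ (M *ᵥ x) = (Uᵀ *ᵥ x) ⬝ᵥ (diagonal hM.eigenvalues *ᵥ (Uᵀ *ᵥ x)) := by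
    conv_lhs => rw [h2]
    rw [← Matrix.mulVec_mulVec, ← Matrix.mulVec_mulVec, Matrix.dotProduct_mulVec,
      Matrix.mulVec_transpose U x]
  rw [this, dotProduct]
  refine Finset.sum_congr rfl fun i _ => ?_
  rw [Matrix.mulVec_diagonal]
  ring

lemma eig_lower {m : Type*} [Fintype m] [DecidableEq m] {M : Matrix m m ℝ}
    (hM : M.IsHermitian) (l : ℕ) (R : Matrix m (Fin l) ℝ) (s : ℝ)
    (h : Rᵀ * M * R = (2 * s) • (1 : Matrix (Fin l) (Fin l) ℝ)) (hs : s * s = 1) :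
    l ≤ (Finset.univ.filter fun i => 0 < s * hM.eigenvalues i).card := by
  classical
  let f : (Fin l → ℝ) →ₗ[ℝ] ({i // 0 < s * hM.eigenvalues i} → ℝ) :=
    (LinearMap.funLeft ℝ ℝ Subtype.val) ∘ₗ
      ((hM.eigenvectorUnitary : Matrix m m ℝ)ᵀ * R).mulVecLin
  have hf : Function.Injective f := by
    rw [← LinearMap.ker_eq_bot, LinearMap.ker_eq_bot']
    intro y hy
    have h1 := quad_eigen hM (R *ᵥ y)
    have h2 : (R *ᵥ y) ⬝ᵥ (M *ᵥ (R *ᵥ y)) = 2 * s * (y ⬝ᵥ y) := by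
      have : (R *ᵥ y) ⬝ᵥ (M *ᵥ (R *ᵥ y)) = y ⬝ᵥ ((Rᵀ * M * R) *ᵥ y) := by
        rw [← Matrix.mulVec_mulVec, ← Matrix.mulVec_mulVec, Matrix.dotProduct_mulVec y,
          Matrix.vecMul_transpose]
      rw [this, h, Matrix.smul_mulVec, Matrix.one_mulVec, dotProduct_smul, smul_eq_mul]
    have h3 : s * ∑ i, hM.eigenvalues i *
      (((hM.eigenvectorUnitary : Matrix m m ℝ)ᵀ *ᵥ (R *ᵥ y)) i) ^ 2 ≤ 0 := by
      rw [Finset.mul_sum]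
      refine Finset.sum_nonpos fun i _ => ?_
      by_cases hi : 0 < s * hM.eigenvalues i
      · have := congrFun hy ⟨i, hi⟩
        simp only [f, LinearMap.comp_apply, LinearMap.funLeft_apply, Matrix.mulVecLin_apply,
          ← Matrix.mulVec_mulVec, Pi.zero_apply] at this
        rw [this]; simp
      · rw [← mul_assoc]
        exact mul_nonpos_of_nonpos_of_nonneg (not_lt.mp hi) (sq_nonneg _)
    rw [← h1, h2] at h3
    have h4 : y ⬝ᵥ y ≤ 0 := by nlinarith
    have h5 : y ⬝ᵥ y = 0 := le_antisymm h4 (Finset.sum_nonneg fun i _ => mul_self_nonneg _)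
    exact dotProduct_self_eq_zero.mp h5
  have := LinearMap.finrank_le_finrank_of_injective hf
  simpa [Fintype.card_subtype] using this

lemma rank_add_le' {m : Type*} [Fintype m] (A B : Matrix m m ℝ) :
    (A + B).rank ≤ A.rank + B.rank := by
  unfold Matrix.rank
  rw [Matrix.mulVecLin_add]
  refine le_trans (Submodule.finrank_mono (?_ : _ ≤ LinearMap.range A.mulVecLin ⊔ LinearMap.range B.mulVecLin)) (Submodule.finrank_add_le_finrank_add_finrank _ _)
  exact LinearMap.range_add_le _ _

lemma inertia_of_factor {m : Type*} [Fintype m] [DecidableEq m] (l : ℕ) (M : Matrix m m ℝ)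
    (P Q F G : Matrix m (Fin l) ℝ) (hM : M = P * Qᵀ + Q * Pᵀ)
    (hPF : Pᵀ * F = 1) (hQF : Qᵀ * F = 0) (hPG : Pᵀ * G = 0) (hQG : Qᵀ * G = 1) :
    posEigs M = l ∧ negEigs M = l ∧ zeroEigs M = Fintype.card m - 2 * l := by
  have hH : M.IsHermitian := by
    rw [Matrix.IsHermitian, Matrix.conjTranspose_eq_transpose_of_trivial, hM]
    simp [Matrix.transpose_mul, add_comm]
  have hFP : Fᵀ * P = 1 := by simpa using congrArg Matrix.transpose hPF
  have hFQ : Fᵀ * Q = 0 := by simpa using congrArg Matrix.transpose hQF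
  have hGP : Gᵀ * P = 0 := by simpa using congrArg Matrix.transpose hPG
  have hGQ : Gᵀ * Q = 1 := by simpa using congrArg Matrix.transpose hQG
  have key : ∀ s : ℝ, (F + s • G)ᵀ * M * (F + s • G) =
      (2 * s) • (1 : Matrix (Fin l) (Fin l) ℝ) := by
    intro s
    have e1 : (F + s • G)ᵀ * P = 1 := by
      simp [Matrix.add_mul, hFP, hGP]
    have e2 : (F + s • G)ᵀ * Q = s • 1 := by
      simp [Matrix.add_mul, hFQ, hGQ]
    have e3 : Pᵀ * (F + s • G) = 1 := by
      simp [Matrix.mul_add, hPF, hPG]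
    have e4 : Qᵀ * (F + s • G) = s • 1 := by
      simp [Matrix.mul_add, hQF, hQG]
    generalize F + s • G = H at *
    rw [hM, Matrix.mul_add, Matrix.add_mul, ← Matrix.mul_assoc, ← Matrix.mul_assoc, e1, e2,
      Matrix.mul_assoc, Matrix.mul_assoc, e3, e4]
    simp [two_mul, add_smul]
  have hp := eig_lower hH l _ 1 (key 1) (by norm_num)
  have hn := eig_lower hH l _ (-1) (key (-1)) (by norm_num)
  have hr : M.rank ≤ 2 * l := by
    rw [hM]
    refine (rank_add_le' _ _).trans ?_
    have h1 := (Matrix.rank_mul_le_left P Qᵀ).trans (Matrix.rank_le_card_width P)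
    have h2 := (Matrix.rank_mul_le_left Q Pᵀ).trans (Matrix.rank_le_card_width Q)
    rw [Fintype.card_fin] at h1 h2
    omega
  rw [hH.rank_eq_card_non_zero_eigs, Fintype.card_subtype] at hr
  have hroots : M.charpoly.roots = Multiset.map hH.eigenvalues Finset.univ.val := by
    rw [hH.roots_charpoly_eq_eigenvalues]; rfl
  have ep : posEigs M = (Finset.univ.filter fun i => 0 < hH.eigenvalues i).card := by
    rw [posEigs, hroots, Multiset.filter_map, Multiset.card_map]; rfl
  have en : negEigs M = (Finset.univ.filter fun i => hH.eigenvalues i < 0).card := by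
    rw [negEigs, hroots, Multiset.filter_map, Multiset.card_map]; rfl
  have ez : zeroEigs M = (Finset.univ.filter fun i => hH.eigenvalues i = 0).card := by
    rw [zeroEigs, hroots, Multiset.filter_map, Multiset.card_map]; rfl
  simp only [one_mul, neg_mul, Left.neg_pos_iff] at hp hn
  have hsplit : (Finset.univ.filter fun i => hH.eigenvalues i ≠ 0).card =
      (Finset.univ.filter fun i => hH.eigenvalues i < 0).card +
      (Finset.univ.filter fun i => 0 < hH.eigenvalues i).card := by
    rw [← Finset.card_union_of_disjoint]
    · congr 1; ext i; simp
    · rw [Finset.disjoint_filter]; intro i _ h1 h2; linarith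
  have htot := Finset.card_filter_add_card_filter_not (s := (Finset.univ : Finset m))
    (fun i => hH.eigenvalues i = 0)
  rw [Finset.card_univ] at htot
  simp only [ne_eq] at hsplit hr
  rw [ep, en, ez]
  omega

lemma bridge_edge {V : Type*} {T : SimpleGraph V} (hT : T.IsTree) {a b : V} (hab : T.Adj a b) :
    ¬ (T.deleteEdges {s(a, b)}).Reachable a b := by
  have := (isAcyclic_iff_forall_adj_isBridge.mp hT.isAcyclic) hab
  rw [SimpleGraph.isBridge_iff] at this
  simpa [SimpleGraph.deleteEdges] using this

/-- A vertex nearer to `b` than to `a` is joined to `b` after deleting `ab`, at the same distance. -/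
lemma side_walk {V : Type*} {T : SimpleGraph V} (hT : T.IsTree) {a b v : V} (hab : T.Adj a b)
    (h : T.dist b v + 1 = T.dist a v) :
    ∃ p : (T.deleteEdges {s(a, b)}).Walk b v, p.length = T.dist b v := by
  classical
  obtain ⟨p, hp⟩ := hT.connected.exists_walk_length_eq_dist b v
  have hna : a ∉ p.support := by
    intro ha
    have h1 := congrArg SimpleGraph.Walk.length (p.take_spec ha)
    rw [SimpleGraph.Walk.length_append] at h1
    have h2 := SimpleGraph.dist_le (p.dropUntil a ha)
    omega
  have he : ∀ e ∈ p.edges, e ∉ ({s(a, b)} : Set (Sym2 V)) := by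
    intro e he h'
    rw [Set.mem_singleton_iff] at h'
    subst h'
    exact hna (p.fst_mem_support_of_mem_edges he)
  exact ⟨p.toDeleteEdges _ he, by simp [hp]⟩

lemma side_dichotomy {V : Type*} {T : SimpleGraph V} (hT : T.IsTree) {a b : V} (v : V)
    (hab : T.Adj a b) :
    T.dist b v + 1 = T.dist a v ∨ T.dist a v + 1 = T.dist b v := by
  have := hT.dist_eq_dist_add_one_of_adj v hab
  rw [T.dist_comm (u := v), T.dist_comm (u := v)] at this
  omega

lemma reach_iff {V : Type*} {T : SimpleGraph V} (hT : T.IsTree) {a b v : V} (hab : T.Adj a b) :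
    (T.deleteEdges {s(a, b)}).Reachable b v ↔ T.dist b v + 1 = T.dist a v := by
  constructor
  · intro h
    rcases side_dichotomy hT v hab with h1 | h1
    · exact h1
    · exfalso
      obtain ⟨p, -⟩ := side_walk hT hab.symm h1
      rw [Sym2.eq_swap] at p
      exact bridge_edge hT hab (p.reachable.trans h.symm)
  · intro h
    obtain ⟨p, -⟩ := side_walk hT hab h
    exact p.reachable

lemma dist_sep {V : Type*} {T : SimpleGraph V} (hT : T.IsTree) {a b x y : V} (hab : T.Adj a b)
    (hx : T.dist b x + 1 = T.dist a x) (hy : ¬ T.dist b y + 1 = T.dist a y) :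
    T.dist x y = T.dist a x + T.dist a y := by
  classical
  obtain ⟨p, hp⟩ := hT.connected.exists_walk_length_eq_dist x y
  have ha : a ∈ p.support := by
    by_contra hna
    have he : ∀ e ∈ p.edges, e ∉ ({s(a, b)} : Set (Sym2 V)) := by
      intro e he h'
      rw [Set.mem_singleton_iff] at h'
      subst h'
      exact hna (p.fst_mem_support_of_mem_edges he)
    have h1 := (reach_iff hT hab).mpr hx
    exact hy ((reach_iff hT hab).mp (h1.trans (p.toDeleteEdges _ he).reachable))
  have h1 := congrArg SimpleGraph.Walk.length (p.take_spec ha)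
  rw [SimpleGraph.Walk.length_append] at h1
  have h2 := SimpleGraph.dist_le (p.dropUntil a ha)
  have h3 := SimpleGraph.dist_le (p.takeUntil a ha)
  have h4 := hT.connected.dist_triangle (u := x) (v := a) (w := y)
  rw [T.dist_comm (u := x) (v := a)] at h3 h4
  omega

lemma branchEcc_eq {V : Type*} [Fintype V] [DecidableEq V] {T : SimpleGraph V} (hT : T.IsTree)
    {a b : V} (hab : T.Adj a b) :
    branchEcc T a b = Finset.univ.sup fun v =>
      if T.dist b v + 1 = T.dist a v then T.dist b v else 0 := by
  classical
  unfold branchEcc eccWithin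
  refine Finset.sup_congr rfl fun v _ => ?_
  simp only [reach_iff hT hab]
  split_ifs with h
  · obtain ⟨p, hp⟩ := side_walk hT hab h
    apply le_antisymm
    · rw [← hp]; exact SimpleGraph.dist_le p
    · exact p.reachable.dist_anti (SimpleGraph.deleteEdges_le _)
  · rfl

lemma exists_first {V : Type*} {T : SimpleGraph V} (hT : T.IsTree) {a v : V}
    (h : 0 < T.dist a v) : ∃ b, T.Adj a b ∧ T.dist b v + 1 = T.dist a v := by
  obtain ⟨p, hp⟩ := hT.connected.exists_walk_length_eq_dist a v
  cases p with
  | nil => simp at h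
  | cons hab q =>
    refine ⟨_, hab, ?_⟩
    have := SimpleGraph.dist_le q
    simp only [SimpleGraph.Walk.length_cons] at hp
    rcases side_dichotomy hT v hab with h1 | h1 <;> omega

/-- For a tree with even diameter `2d`, centre `u₀` and `u₁, …, u_l` exactly the neighbours of
`u₀` whose branch has eccentricity `d-1`, the inertia of the eccentricity matrix is
`(l, l, n - 2l)`. -/
theorem stmt4 {V : Type*} [Fintype V] [DecidableEq V] (T : SimpleGraph V) (n d l : ℕ)
    (hT : T.IsTree) (hn : Fintype.card V = n) (hd : 2 ≤ d) (hdiam : gdiam T = 2*d)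
    (u₀ : V) (hcen : ecc T u₀ = d)
    (hl : 2 ≤ l) (u : Fin l → V) (hinj : Function.Injective u)
    (hadj : ∀ i : Fin l, T.Adj u₀ (u i))
    (hbranch : ∀ i : Fin l, branchEcc T u₀ (u i) = d - 1)
    (hexact : ∀ v : V, T.Adj u₀ v → branchEcc T u₀ v = d - 1 → ∃ i : Fin l, v = u i) :
    posEigs (eccMatrix T) = l ∧ negEigs (eccMatrix T) = l ∧
      zeroEigs (eccMatrix T) = n - 2*l := by
  classical
  subst hn
  have hle : ∀ v, T.dist u₀ v ≤ d := fun v => hcen ▸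
    Finset.le_sup (f := fun v => T.dist u₀ v) (Finset.mem_univ v)
  -- deep vertices in the branches
  have hw : ∀ i, ∃ w, T.dist (u i) w + 1 = T.dist u₀ w ∧ T.dist u₀ w = d := by
    intro i
    have h := hbranch i
    rw [branchEcc_eq hT (hadj i)] at h
    obtain ⟨w, -, hw⟩ := Finset.exists_mem_eq_sup (Finset.univ : Finset V) ⟨u₀, Finset.mem_univ _⟩
      (fun v => if T.dist (u i) v + 1 = T.dist u₀ v then T.dist (u i) v else 0)
    rw [h] at hw
    split_ifs at hw with h1
    · exact ⟨w, h1, by omega⟩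
    · omega
  choose w hw1 hw2 using hw
  have huu : ∀ i j, i ≠ j → ¬ (T.dist (u i) (u j) + 1 = T.dist u₀ (u j)) := by
    intro i j hij h
    rw [SimpleGraph.dist_eq_one_iff_adj.mpr (hadj j)] at h
    have h0 : T.dist (u i) (u j) = 0 := by omega
    exact hij (hinj ((hT.connected.dist_eq_zero_iff).mp h0))
  have huniq : ∀ i j v, T.dist (u i) v + 1 = T.dist u₀ v → T.dist (u j) v + 1 = T.dist u₀ v →
      i = j := by
    intro i j v hi hj
    by_contra hij
    have h := dist_sep hT (hadj i) hi (huu i j hij)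
    rw [T.dist_comm (u := v), SimpleGraph.dist_eq_one_iff_adj.mpr (hadj j)] at h
    omega
  have hecc : ∀ v, ecc T v = d + T.dist u₀ v := by
    intro v
    apply le_antisymm
    · refine Finset.sup_le fun x _ => ?_
      have h1 := hT.connected.dist_triangle (u := v) (v := u₀) (w := x)
      rw [T.dist_comm (u := v) (v := u₀)] at h1
      have := hle x
      omega
    · have : ∃ i, ¬ (T.dist (u i) v + 1 = T.dist u₀ v) := by
        by_contra! hc
        have := huniq ⟨0, by omega⟩ ⟨1, by omega⟩ v (hc _) (hc _)
        simp at this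
      obtain ⟨i, hi⟩ := this
      have h1 := dist_sep hT (hadj i) (hw1 i) hi
      rw [hw2, T.dist_comm] at h1
      rw [← h1]
      exact Finset.le_sup (f := fun x => T.dist v x) (Finset.mem_univ (w i))
  have hdeep : ∀ v, T.dist u₀ v = d → ∃ i, T.dist (u i) v + 1 = T.dist u₀ v := by
    intro v hv
    obtain ⟨b, hab, hb⟩ := exists_first hT (a := u₀) (v := v) (by omega)
    have : branchEcc T u₀ b = d - 1 := by
      rw [branchEcc_eq hT hab]
      apply le_antisymm
      · refine Finset.sup_le fun x _ => ?_
        have := hle x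
        split_ifs <;> omega
      · have h := Finset.le_sup (f := fun v => if T.dist b v + 1 = T.dist u₀ v then T.dist b v else 0)
          (Finset.mem_univ v)
        simp only [hb, if_true] at h
        refine le_trans ?_ h
        omega
    obtain ⟨i, hi⟩ := hexact b hab this
    exact ⟨i, hi ▸ hb⟩
  have hsame : ∀ i x y, T.dist (u i) x + 1 = T.dist u₀ x → T.dist (u i) y + 1 = T.dist u₀ y →
      T.dist x y + 2 ≤ T.dist u₀ x + T.dist u₀ y := by
    intro i x y hx hy
    have h1 := hT.connected.dist_triangle (u := x) (v := u i) (w := y)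
    rw [T.dist_comm (u := x) (v := u i)] at h1
    omega
  let In : Fin l → V → Prop := fun j v => T.dist (u j) v + 1 = T.dist u₀ v
  let a : V → ℝ := fun v => if T.dist u₀ v = d then d else d + T.dist u₀ v
  let P : Matrix V (Fin l) ℝ := Matrix.of fun v j => if In j v then 0 else a v
  let Q : Matrix V (Fin l) ℝ := Matrix.of fun v j => if In j v ∧ T.dist u₀ v = d then 1 else 0
  let F : Matrix V (Fin l) ℝ := Matrix.of fun v k =>
    (if v = u₀ then 1 / (d : ℝ) else 0) + (if v = u k then - (1 / ((d : ℝ) + 1)) else 0)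
  let G : Matrix V (Fin l) ℝ := Matrix.of fun v k =>
    (if v = w k then 1 else 0) + (if v = u k then - ((d : ℝ) / ((d : ℝ) + 1)) else 0)
  have hd0 : (d : ℝ) ≠ 0 := by positivity
  have hd1 : (d : ℝ) + 1 ≠ 0 := by positivity
  have hu1 : ∀ i, T.dist u₀ (u i) = 1 := fun i => SimpleGraph.dist_eq_one_iff_adj.mpr (hadj i)
  have hInu : ∀ j k, In j (u k) ↔ j = k := by
    intro j k
    constructor
    · intro h
      by_contra hjk
      exact huu j k hjk h
    · rintro rfl
      simp [In, hu1]
  have hInw : ∀ j k, In j (w k) ↔ j = k := by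
    intro j k
    constructor
    · intro h
      exact huniq j k _ h (hw1 k)
    · rintro rfl
      exact hw1 j
  have hIn0 : ∀ j, ¬ In j u₀ := by
    intro j h
    simp [In] at h
  have hPu0 : ∀ j, P u₀ j = d := by
    intro j
    simp [P, hIn0, a]
  have hPu : ∀ j k, P (u k) j = if j = k then 0 else (d : ℝ) + 1 := by
    intro j k
    have : (1 : ℕ) ≠ d := by omega
    simp [P, hInu, a, hu1, this]
  have hPw : ∀ j k, P (w k) j = if j = k then 0 else (d : ℝ) := by
    intro j k
    simp [P, hInw, a, hw2]
  have hQu0 : ∀ j, Q u₀ j = 0 := by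
    intro j
    simp [Q, hIn0]
  have hQu : ∀ j k, Q (u k) j = 0 := by
    intro j k
    have : (1 : ℕ) ≠ d := by omega
    simp [Q, hu1, this]
  have hQw : ∀ j k, Q (w k) j = if j = k then 1 else 0 := by
    intro j k
    simp [Q, hInw, hw2]
  have hsumF : ∀ (X : Matrix V (Fin l) ℝ) j k, (Xᵀ * F) j k =
      X u₀ j * (1 / (d : ℝ)) + X (u k) j * (- (1 / ((d : ℝ) + 1))) := by
    intro X j k
    simp only [Matrix.mul_apply, F, Matrix.of_apply, Matrix.transpose_apply, mul_add, mul_ite,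
      mul_zero, Finset.sum_add_distrib, Finset.sum_ite_eq', Finset.mem_univ, if_true]
  have hsumG : ∀ (X : Matrix V (Fin l) ℝ) j k, (Xᵀ * G) j k =
      X (w k) j * 1 + X (u k) j * (- ((d : ℝ) / ((d : ℝ) + 1))) := by
    intro X j k
    simp only [Matrix.mul_apply, G, Matrix.of_apply, Matrix.transpose_apply, mul_add, mul_ite,
      mul_zero, Finset.sum_add_distrib, Finset.sum_ite_eq', Finset.mem_univ, if_true]
  refine inertia_of_factor l (eccMatrix T) P Q F G ?_ ?_ ?_ ?_ ?_
  · ext x y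
    have hsum : ∀ x y, (P * Qᵀ) x y =
        if T.dist u₀ y = d ∧ ∃ j, In j y ∧ ¬ In j x then a x else 0 := by
      intro x y
      rw [Matrix.mul_apply]
      split_ifs with h
      · obtain ⟨hy, j, hj, hjx⟩ := h
        rw [Finset.sum_eq_single j]
        · simp [P, Q, hj, hjx, hy]
        · intro k _ hk
          have : ¬ In k y := fun h => hk (huniq k j y h hj)
          simp [Q, this]
        · simp
      · refine Finset.sum_eq_zero fun j _ => ?_
        by_cases hy : T.dist u₀ y = d
        · by_cases hj : In j y
          · have : In j x := by
              by_contra hc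
              exact h ⟨hy, j, hj, hc⟩
            simp [P, this]
          · simp [Q, hj]
        · simp [Q, hy]
    have hQP : (Q * Pᵀ) x y = (P * Qᵀ) y x := by
      simp only [Matrix.mul_apply, Matrix.transpose_apply, mul_comm]
    have hxd := hle x
    have hyd := hle y
    have htri := hT.connected.dist_triangle (u := x) (v := u₀) (w := y)
    rw [T.dist_comm (u := x) (v := u₀)] at htri
    rw [Matrix.add_apply, hQP, hsum, hsum, eccMatrix, Matrix.of_apply, hecc, hecc]
    -- if one vertex is deep, determine the relation
    have hrel : ∀ x y, T.dist u₀ y = d → (∃ j, In j y ∧ ¬ In j x) →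
        T.dist x y = T.dist u₀ x + d := by
      rintro x y hy ⟨j, hj, hjx⟩
      have := dist_sep hT (hadj j) hj hjx
      rw [T.dist_comm] at this
      omega
    have hrel' : ∀ x y, T.dist u₀ y = d → ¬ (∃ j, In j y ∧ ¬ In j x) →
        T.dist x y + 2 ≤ T.dist u₀ x + d := by
      intro x y hy h
      obtain ⟨j, hj⟩ := hdeep y hy
      have hjx : In j x := by
        by_contra hc
        exact h ⟨j, hj, hc⟩
      have := hsame j x y hjx hj
      omega
    have hcomm : T.dist y x = T.dist x y := T.dist_comm
    by_cases hx : T.dist u₀ x = d <;> by_cases hy : T.dist u₀ y = d <;>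
      by_cases h1 : (∃ j, In j y ∧ ¬ In j x) <;> by_cases h2 : (∃ j, In j x ∧ ¬ In j y) <;>
      simp only [hx, hy, h1, h2, true_and, false_and, if_true, if_false, a, add_zero, zero_add]
    all_goals first
      | (have e1 := hrel x y hy h1
         first
         | (have e2 := hrel' y x hx h2
            exfalso; omega)
         | (rw [if_pos (by omega), e1, hx]; push_cast; ring)
         | (rw [if_pos (by omega), e1]; push_cast; ring))
      | (have e1 := hrel y x hx h2
         first
         | (have e2 := hrel' x y hy h1
            exfalso; omega)
         | (rw [if_pos (by omega), ← hcomm, e1]; push_cast; ring))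
      | (have e1 := hrel' x y hy h1
         rw [if_neg (by omega)])
      | (have e1 := hrel' y x hx h2
         rw [if_neg (by omega)])
      | rw [if_neg (by omega)]
  · ext j k
    rw [hsumF, hPu0, hPu, Matrix.one_apply]
    split_ifs <;> field_simp <;> ring
  · ext j k
    rw [hsumF, hQu0, hQu]
    simp
  · ext j k
    rw [hsumG, hPw, hPu]
    split_ifs <;> simp <;> field_simp <;> ring
  · ext j k
    rw [hsumG, hQw, hQu, Matrix.one_apply]
    simp
end

section
/- Let T be a tree with odd diameter. Then the spectrum of the eccentricity matrix 𝓔(T) is symmetric about the origin: if λ is an eigenvalue of 𝓔(T) with multiplicity k, then −λ is also an eigenvalue of 𝓔(T) with multiplicity k. -/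
open SimpleGraph Finset Matrix Polynomial

/-- A sequence with unit steps and no interior peak is V-shaped. -/
lemma vshape (f : ℕ → ℕ) (n : ℕ)
    (hstep : ∀ i < n, f i = f (i+1) + 1 ∨ f (i+1) = f i + 1)
    (hpeak : ∀ i, i + 2 ≤ n → ¬ (f (i+1) = f i + 1 ∧ f (i+1) = f (i+2) + 1)) :
    ∃ i ≤ n, f 0 = i + f i ∧ f n + i = n + f i ∧ (i < n → f n = f (n-1) + 1) := by
  induction n with
  | zero => exact ⟨0, by simp⟩
  | succ n ih =>
    obtain ⟨i, hi, h0, hn, hl⟩ := ih (fun i hi => hstep i (by omega))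
      (fun i hi => hpeak i (by omega))
    rcases hstep n (by omega) with h | h
    · by_cases hin : i = n
      · subst hin
        exact ⟨i+1, le_rfl, by omega, by omega, by omega⟩
      · exfalso
        have := hl (by omega)
        obtain ⟨m, rfl⟩ : ∃ m, n = m + 1 := ⟨n-1, by omega⟩
        exact hpeak m (by omega) ⟨by simpa using this, h⟩
    · exact ⟨i, by omega, h0, by omega, fun _ => by simpa using h⟩

lemma closer_unique {V : Type*} {T : SimpleGraph V} (hT : T.IsTree) {a x w₁ w₂ : V}
    (h₁ : T.Adj x w₁) (h₂ : T.Adj x w₂) (d₁ : T.dist x a = T.dist w₁ a + 1)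
    (d₂ : T.dist x a = T.dist w₂ a + 1) : w₁ = w₂ := by
  obtain ⟨p, hp⟩ := hT.connected.exists_walk_length_eq_dist w₁ a
  obtain ⟨q, hq⟩ := hT.connected.exists_walk_length_eq_dist w₂ a
  have e := (hT.existsUnique_path x a).unique
    (Walk.isPath_of_length_eq_dist (Walk.cons h₁ p) (by simp [hp, d₁]))
    (Walk.isPath_of_length_eq_dist (Walk.cons h₂ q) (by simp [hq, d₂]))
  have := congrArg (fun w : T.Walk x a => w.getVert 1) e
  simpa using this

/-- The geodesic between two vertices, with gates for every vertex. -/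
lemma geodesic {V : Type*} {T : SimpleGraph V} (hT : T.IsTree) (u v : V) :
    ∃ q : ℕ → V, (∀ i j, i ≤ j → j ≤ T.dist u v → T.dist (q i) (q j) ≤ j - i) ∧
      ∀ a, ∃ i ≤ T.dist u v, T.dist u a = i + T.dist (q i) a ∧
        T.dist v a + i = T.dist u v + T.dist (q i) a := by
  obtain ⟨p, hp, hl⟩ := hT.connected.exists_path_of_dist u v
  have hadj : ∀ i < T.dist u v, T.Adj (p.getVert i) (p.getVert (i+1)) := fun i hi =>
    p.adj_getVert_succ (by omega)
  refine ⟨p.getVert, ?_, fun a => ?_⟩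
  · intro i j hij
    induction j, hij using Nat.le_induction with
    | base => intro _; simp
    | succ j hij ih =>
      intro hj
      have h1 := ih (by omega)
      have h2 := dist_eq_one_iff_adj.2 (hadj j (by omega))
      have h3 := hT.connected.dist_triangle (u := p.getVert i) (v := p.getVert j)
        (w := p.getVert (j+1))
      omega
  · obtain ⟨i, hi, h0, hn, -⟩ := vshape (fun i => T.dist (p.getVert i) a) (T.dist u v)
      (fun i hi => by
        have := hT.dist_eq_dist_add_one_of_adj a (hadj i hi)
        simpa only [dist_comm (u := a)] using this)
      (fun i hi ⟨h1, h2⟩ => by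
        have := closer_unique hT (hadj i (by omega)).symm (hadj (i+1) (by omega)) h1 h2
        have := hp.getVert_injOn (by simp; omega) (by simp; omega) this
        omega)
    refine ⟨i, hi, by simpa using h0, ?_⟩
    have : p.getVert (T.dist u v) = v := by rw [← hl]; simp
    simpa [this] using hn

lemma four_point {V : Type*} {T : SimpleGraph V} (hT : T.IsTree) (u v a b : V) :
    T.dist u v + T.dist a b ≤ T.dist u a + T.dist v b ∨
      T.dist u v + T.dist a b ≤ T.dist u b + T.dist v a := by
  obtain ⟨q, hq, hg⟩ := geodesic hT u v
  obtain ⟨i, hi, ha1, ha2⟩ := hg a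
  obtain ⟨j, hj, hb1, hb2⟩ := hg b
  have t1 := hT.connected.dist_triangle (u := a) (v := q i) (w := b)
  have t2 := hT.connected.dist_triangle (u := q i) (v := q j) (w := b)
  rw [dist_comm (u := a) (v := q i)] at t1
  rcases le_total i j with h | h
  · have := hq i j h hj
    right; omega
  · have := hq j i h hi
    rw [dist_comm] at this
    left; omega

lemma dist_ne_of_odd {V : Type*} {T : SimpleGraph V} (hT : T.IsTree) (a b u : V)
    (h : Odd (T.dist a b)) : T.dist u a ≠ T.dist u b := by
  obtain ⟨q, hq, hg⟩ := geodesic hT a b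
  obtain ⟨i, hi, h1, h2⟩ := hg u
  obtain ⟨k, hk⟩ := h
  rw [dist_comm (u := u) (v := a), dist_comm (u := u) (v := b)]
  omega

lemma same_side {V : Type*} [Fintype V] {T : SimpleGraph V} (hT : T.IsTree) (a b u v : V)
    (hab : ∀ x y, T.dist x y ≤ T.dist a b)
    (hu : T.dist u a < T.dist u b) (hv : T.dist v a < T.dist v b) :
    T.dist u v ≠ min (ecc T u) (ecc T v) := by
  have h1 : T.dist u b ≤ ecc T u := Finset.le_sup (f := fun w => T.dist u w) (mem_univ b)
  have h2 : T.dist v b ≤ ecc T v := Finset.le_sup (f := fun w => T.dist v w) (mem_univ b)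
  have h3 := four_point hT u v a b
  have h4 := hab u b
  have h5 := hab v b
  omega

lemma rootMult_symm {V : Type*} [Fintype V] [DecidableEq V] (M : Matrix V V ℝ)
    (s : V → ℝ) (hs : ∀ u, s u * s u = 1) (hM : ∀ u v, s u * M u v * s v = - M u v) (x : ℝ) :
    M.charpoly.rootMultiplicity x = M.charpoly.rootMultiplicity (-x) := by
  have hd : diagonal s * diagonal s = (1 : Matrix V V ℝ) := by
    rw [diagonal_mul_diagonal, ← diagonal_one]; congr 1; ext u; exact hs u
  have hconj : diagonal s * M * diagonal s = -M := by
    ext u v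
    rw [mul_diagonal, diagonal_mul, hM]; rfl
  have hc : (-M).charpoly = M.charpoly := by
    rw [← hconj]
    have h := charpoly_units_conj ⟨diagonal s, diagonal s, hd, hd⟩ M
    rwa [show ((⟨diagonal s, diagonal s, hd, hd⟩ : (Matrix V V ℝ)ˣ) : Matrix V V ℝ)⁻¹ = diagonal s
      from Matrix.inv_eq_right_inv hd] at h
  have hcomp : M.charpoly.comp (C (-1) * X + C 0) = C ((-1) ^ Fintype.card V) * M.charpoly := by
    apply Polynomial.funext
    intro t
    conv_rhs => rw [← hc]
    simp only [eval_comp, eval_mul, eval_add, eval_C, eval_X, Matrix.eval_charpoly]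
    rw [← Matrix.det_smul]
    congr 1
    ext u v
    simp [Matrix.scalar_apply, Matrix.diagonal_apply]
    split_ifs <;> ring
  have h1 := rootMultiplicity_comp_C_mul_X_add_C M.charpoly (-1) 0 x (by simp)
  rw [hcomp, rootMultiplicity_mul (by
    refine mul_ne_zero ?_ M.charpoly_monic.ne_zero
    rw [Ne, C_eq_zero]; positivity), rootMultiplicity_C] at h1
  simpa using h1

/-- The spectrum of the eccentricity matrix of a tree with odd diameter is symmetric about
the origin: every `λ` and `-λ` occur as eigenvalues with the same multiplicity. -/
theorem stmt5 {V : Type*} [Fintype V] [DecidableEq V] (T : SimpleGraph V)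
    (hT : T.IsTree) (hodd : Odd (gdiam T)) :
    ∀ x : ℝ, (eccMatrix T).charpoly.rootMultiplicity x
      = (eccMatrix T).charpoly.rootMultiplicity (-x) := by
  intro x
  have : Nonempty V := hT.connected.nonempty
  obtain ⟨⟨a, b⟩, -, hab⟩ := Finset.exists_mem_eq_sup (Finset.univ : Finset (V × V))
    Finset.univ_nonempty (fun p : V × V => T.dist p.1 p.2)
  have hmax : ∀ x y, T.dist x y ≤ T.dist a b := fun x y => by
    have := Finset.le_sup (f := fun p : V × V => T.dist p.1 p.2) (mem_univ (x, y))
    rwa [hab] at this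
  have hodd' : Odd (T.dist a b) := by
    unfold gdiam at hodd
    rwa [hab] at hodd
  refine rootMult_symm _ (fun u => if T.dist u a < T.dist u b then 1 else -1) ?_ ?_ x
  · intro u
    split_ifs <;> norm_num
  · intro u v
    have hu := dist_ne_of_odd hT a b u hodd'
    have hv := dist_ne_of_odd hT a b v hodd'
    have hmax' : ∀ x y, T.dist x y ≤ T.dist b a := fun x y => by
      rw [dist_comm (u := b)]; exact hmax x y
    split_ifs with h1 h2 h2
    · simp [eccMatrix, same_side hT a b u v hmax h1 h2]
    · ring
    · ring
    · simp [eccMatrix, same_side hT b a u v hmax' (by omega) (by omega)]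
end

section
/- Let T be a tree on n ≥ 5 vertices with odd diameter. Then the eccentricity matrix 𝓔(T) has exactly five distinct eigenvalues. -/
open SimpleGraph Finset Matrix Polynomial

theorem alg_nonzero {V : Type*} [Fintype V] [DecidableEq V] (E : Matrix V V ℝ)
    (p q v w : V → ℝ) (D a b α β : ℝ) (hD : 0 < D) (ha : 0 < a)
    (hE : ∀ i j, E i j = D * (p i * q j + q i * p j) + p i * w j + w i * p j
      + v i * q j + q i * v j)
    (hpp : p ⬝ᵥ p = a) (hqq : q ⬝ᵥ q = b) (hvv : v ⬝ᵥ v = α) (hww : w ⬝ᵥ w = β)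
    (hβ : 0 < β)
    (hpq : p ⬝ᵥ q = 0) (hpv : p ⬝ᵥ v = 0) (hpw : p ⬝ᵥ w = 0)
    (hqv : q ⬝ᵥ v = 0) (hqw : q ⬝ᵥ w = 0) (hvw : v ⬝ᵥ w = 0) (μ : ℝ) (hμ : μ ≠ 0) :
    (∃ x : V → ℝ, x ≠ 0 ∧ E *ᵥ x = μ • x) ↔
      (μ ^ 2 - a * β) * (μ ^ 2 - b * α) = a * b * D ^ 2 * μ ^ 2 := by
  have hmul : ∀ x : V → ℝ, E *ᵥ x = (D * (q ⬝ᵥ x) + w ⬝ᵥ x) • p + (D * (p ⬝ᵥ x) + v ⬝ᵥ x) • q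
      + (q ⬝ᵥ x) • v + (p ⬝ᵥ x) • w := by
    intro x
    ext i
    simp only [mulVec, dotProduct, hE, Pi.add_apply, Pi.smul_apply, smul_eq_mul,
      Finset.mul_sum, Finset.sum_mul, ← Finset.sum_add_distrib]
    exact Finset.sum_congr rfl fun j _ => by ring
  have hqp : q ⬝ᵥ p = 0 := by rw [dotProduct_comm]; exact hpq
  have hvp : v ⬝ᵥ p = 0 := by rw [dotProduct_comm]; exact hpv
  have hwp : w ⬝ᵥ p = 0 := by rw [dotProduct_comm]; exact hpw
  have hvq : v ⬝ᵥ q = 0 := by rw [dotProduct_comm]; exact hqv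
  have hwq : w ⬝ᵥ q = 0 := by rw [dotProduct_comm]; exact hqw
  have hwv : w ⬝ᵥ v = 0 := by rw [dotProduct_comm]; exact hvw
  constructor
  · rintro ⟨x, hx, h⟩
    rw [hmul] at h
    have h1 := congrArg (fun z => p ⬝ᵥ z) h
    have h2 := congrArg (fun z => q ⬝ᵥ z) h
    have h3 := congrArg (fun z => v ⬝ᵥ z) h
    have h4 := congrArg (fun z => w ⬝ᵥ z) h
    simp only [dotProduct_add, dotProduct_smul, smul_eq_mul, hpp, hpq, hpv, hpw, hqp, hqq, hqv,
        hqw, hvp, hvq, hvv, hvw, hwp, hwq, hwv, hww] at h1 h2 h3 h4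
    generalize p ⬝ᵥ x = X at *
    generalize q ⬝ᵥ x = Y at *
    generalize v ⬝ᵥ x = Z at *
    generalize w ⬝ᵥ x = W at *
    have e1 : (μ ^ 2 - a * β) * X = a * D * μ * Y := by linear_combination -μ * h1 - a * h4
    have e2 : (μ ^ 2 - b * α) * Y = b * D * μ * X := by linear_combination -μ * h2 - b * h3
    by_cases hX : X = 0
    · by_cases hY : Y = 0
      · exfalso
        subst hX hY
        have hZ : Z = 0 := by simpa [hμ] using h3
        have hW : W = 0 := by simpa [hμ] using h4
        subst hZ hW
        apply hx
        have : μ • x = 0 := by rw [← h]; simp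
        exact (smul_eq_zero.mp this).resolve_left hμ
      · apply mul_right_cancel₀ hY
        linear_combination (μ ^ 2 - a * β) * e2 + b * D * μ * e1
    · apply mul_right_cancel₀ hX
      linear_combination (μ ^ 2 - b * α) * e1 + a * D * μ * e2
  · intro h
    set X := a * D * μ with hX
    set Y := μ ^ 2 - a * β with hY
    refine ⟨(D * Y + β * X / μ) • p + (D * X + α * Y / μ) • q + Y • v + X • w, ?_, ?_⟩
    · intro h0
      have h4 := congrArg (fun z => w ⬝ᵥ z) h0
      simp only [dotProduct_add, dotProduct_smul, smul_eq_mul, hwp, hwq, hwv, hww,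
        dotProduct_zero] at h4
      have : X * β ≠ 0 := by positivity
      apply this; linarith
    · rw [hmul]
      simp only [dotProduct_add, dotProduct_smul, smul_eq_mul, hpp, hpq, hpv, hpw, hqp, hqq, hqv,
        hqw, hvp, hvq, hvv, hvw, hwp, hwq, hwv, hww]
      have e1 : (D * Y + β * X / μ) * a = μ * X := by rw [hX, hY]; field_simp; ring
      have e2 : (D * X + α * Y / μ) * b = μ * Y := by
        rw [hX]; field_simp; linear_combination -h
      ext i
      simp only [Pi.add_apply, Pi.smul_apply, smul_eq_mul, mul_zero, add_zero, zero_add, e1, e2]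
      field_simp

theorem alg_zero {V : Type*} [Fintype V] [DecidableEq V] (E : Matrix V V ℝ)
    (p q v w : V → ℝ) (D : ℝ) (hcard : 5 ≤ Fintype.card V)
    (hE : ∀ i j, E i j = D * (p i * q j + q i * p j) + p i * w j + w i * p j
      + v i * q j + q i * v j) :
    ∃ x : V → ℝ, x ≠ 0 ∧ E *ᵥ x = 0 := by
  let M : Matrix (Fin 4) V ℝ := ![p, q, v, w]
  have hk : LinearMap.ker M.mulVecLin ≠ ⊥ := by
    apply LinearMap.ker_ne_bot_of_finrank_lt
    simp; omega
  obtain ⟨x, hx, hx0⟩ := (Submodule.ne_bot_iff _).mp hk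
  refine ⟨x, hx0, ?_⟩
  rw [LinearMap.mem_ker, mulVecLin_apply] at hx
  have h0 : p ⬝ᵥ x = 0 := congrFun hx 0
  have h1 : q ⬝ᵥ x = 0 := congrFun hx 1
  have h2 : v ⬝ᵥ x = 0 := congrFun hx 2
  have h3 : w ⬝ᵥ x = 0 := congrFun hx 3
  ext i
  have : (E *ᵥ x) i = (D * (q ⬝ᵥ x) + w ⬝ᵥ x) * p i + (D * (p ⬝ᵥ x) + v ⬝ᵥ x) * q i
      + (q ⬝ᵥ x) * v i + (p ⬝ᵥ x) * w i := by
    simp only [mulVec, dotProduct, hE,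
      Finset.mul_sum, Finset.sum_mul, ← Finset.sum_add_distrib]
    exact Finset.sum_congr rfl fun j _ => by ring
  rw [this, h0, h1, h2, h3]; simp

theorem mem_roots_charpoly {V : Type*} [Fintype V] [DecidableEq V] (E : Matrix V V ℝ) (μ : ℝ) :
    μ ∈ E.charpoly.roots.toFinset ↔ ∃ x : V → ℝ, x ≠ 0 ∧ E *ᵥ x = μ • x := by
  rw [Multiset.mem_toFinset, mem_roots (charpoly_monic E).ne_zero, IsRoot, eval_charpoly,
    ← exists_mulVec_eq_zero_iff]
  refine exists_congr fun x => and_congr_right fun _ => ?_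
  rw [sub_mulVec, sub_eq_zero, eq_comm]
  simp [scalar_apply, ← smul_one_eq_diagonal, smul_mulVec]

theorem quartic (a b α β D : ℝ) (hD : 0 < D) (ha : 0 < a) (hb : 0 < b) (hα : 0 < α) (hβ : 0 < β)
    (S : Finset ℝ) (hS : ∀ μ, μ ∈ S ↔ μ = 0 ∨
      (μ ^ 2 - a * β) * (μ ^ 2 - b * α) = a * b * D ^ 2 * μ ^ 2) : S.card = 5 := by
  set s := a * b * D ^ 2 + a * β + b * α with hs
  set c := a * b * α * β with hc
  have hc0 : 0 < c := by positivity
  have hs0 : 0 < s := by positivity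
  have hdisc : 0 < s ^ 2 - 4 * c := by
    have h1 : 0 < a * b * D ^ 2 := by positivity
    have h2 : 0 < a * β + b * α := by positivity
    have : s ^ 2 - 4 * c = (a * b * D ^ 2) ^ 2 + 2 * (a * b * D ^ 2) * (a * β + b * α)
      + (a * β - b * α) ^ 2 := by rw [hs, hc]; ring
    rw [this]; positivity
  set r := √(s ^ 2 - 4 * c) with hr
  have hr0 : 0 < r := Real.sqrt_pos.mpr hdisc
  have hr2 : r ^ 2 = s ^ 2 - 4 * c := Real.sq_sqrt hdisc.le
  have hrs : r < s := by nlinarith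
  set m := √((s - r) / 2) with hm
  set M := √((s + r) / 2) with hM
  have hm0 : 0 < m := Real.sqrt_pos.mpr (by linarith)
  have hm2 : m ^ 2 = (s - r) / 2 := Real.sq_sqrt (by linarith)
  have hM2 : M ^ 2 = (s + r) / 2 := Real.sq_sqrt (by linarith)
  have hmM : m < M := Real.sqrt_lt_sqrt (by linarith) (by linarith)
  have : S = {0, m, -m, M, -M} := by
    ext μ
    rw [hS]
    simp only [Finset.mem_insert, Finset.mem_singleton]
    refine or_congr_right ?_
    have key : (μ ^ 2 - a * β) * (μ ^ 2 - b * α) - a * b * D ^ 2 * μ ^ 2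
        = (μ - m) * ((μ + m) * ((μ - M) * (μ + M))) := by
      have : (μ - m) * ((μ + m) * ((μ - M) * (μ + M))) = (μ ^ 2 - m ^ 2) * (μ ^ 2 - M ^ 2) := by
        ring
      rw [this, hm2, hM2]
      linear_combination (1 / 4 : ℝ) * hr2
    rw [← sub_eq_zero, key]
    simp only [mul_eq_zero, sub_eq_zero, add_eq_zero_iff_eq_neg]
  rw [this]
  have := hm0.trans hmM
  rw [card_insert_of_notMem, card_insert_of_notMem, card_insert_of_notMem, card_insert_of_notMem,
    card_singleton] <;> simp only [Finset.mem_insert, Finset.mem_singleton, not_or] <;>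
    (try refine ⟨?_, ?_⟩) <;> (try refine ⟨?_, ?_⟩) <;> (try refine ⟨?_, ?_⟩) <;> intro h <;> linarith

/-- Geodesics from one side of an edge to the other side pass through the edge. -/
theorem cross_dist {V : Type*} [Fintype V] (T : SimpleGraph V) (hT : T.IsTree) {c e u v : V}
    (hce : T.Adj c e) (hu : T.dist u e = T.dist u c + 1) (hv : T.dist v c = T.dist v e + 1) :
    T.dist u v = T.dist u c + T.dist v e + 1 := by
  classical
  have hsplit : ∀ {x y z : V} (p : T.Walk x y), p.length = T.dist x y → z ∈ p.support →
      T.dist x y = T.dist x z + T.dist z y := by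
    intro x y z p hp hz
    have h1 := congrArg Walk.length (p.take_spec hz)
    rw [Walk.length_append] at h1
    have h2 := T.dist_le (p.takeUntil z hz)
    have h3 := T.dist_le (p.dropUntil z hz)
    have h4 := hT.connected.dist_triangle (u := x) (v := z) (w := y)
    omega
  have hec : T.dist c e = 1 := dist_eq_one_iff_adj.mpr hce
  have hec' : T.dist e c = 1 := dist_eq_one_iff_adj.mpr hce.symm
  have hb : T.IsBridge s(c, e) := isAcyclic_iff_forall_adj_isBridge.mp hT.isAcyclic hce
  rw [isBridge_iff_forall_walk_mem_edges] at hb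
  obtain ⟨p, hp⟩ := hT.connected.exists_walk_length_eq_dist u c
  obtain ⟨q, hq⟩ := hT.connected.exists_walk_length_eq_dist v e
  obtain ⟨g, hg⟩ := hT.connected.exists_walk_length_eq_dist u v
  have hmem := hb ((p.reverse.append g).append q)
  simp only [Walk.edges_append, Walk.edges_reverse, List.mem_append, List.mem_reverse] at hmem
  have hcg : c ∈ g.support := by
    rcases hmem with (h | h) | h
    · have := hsplit p hp (p.snd_mem_support_of_mem_edges h)
      omega
    · exact g.fst_mem_support_of_mem_edges h
    · have := hsplit q hq (q.fst_mem_support_of_mem_edges h)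
      omega
  have := hsplit g hg hcg
  rw [T.dist_comm (u := c) (v := v)] at this
  omega

theorem dist_adj_cases {V : Type*} [Fintype V] (T : SimpleGraph V) (hT : T.IsTree) {c e : V}
    (hce : T.Adj c e) (u : V) :
    T.dist u e = T.dist u c + 1 ∨ T.dist u c = T.dist u e + 1 := by
  have h1 := hT.dist_ne_of_adj u hce
  have hec : T.dist c e = 1 := dist_eq_one_iff_adj.mpr hce
  have hec' : T.dist e c = 1 := dist_eq_one_iff_adj.mpr hce.symm
  have h2 := hT.connected.dist_triangle (u := u) (v := c) (w := e)
  have h3 := hT.connected.dist_triangle (u := u) (v := e) (w := c)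
  omega

theorem exists_levels {V : Type*} [Fintype V] [DecidableEq V] (T : SimpleGraph V)
    (hT : T.IsTree) (h5 : 5 ≤ Fintype.card V) (hodd : Odd (gdiam T)) :
    ∃ (d : ℕ) (A : V → Prop) (l : V → ℕ), (∀ u, l u ≤ d) ∧
      (∃ u, A u ∧ l u = d) ∧ (∃ u, ¬ A u ∧ l u = d) ∧ (∃ u, A u ∧ l u < d) ∧
      (∃ u, ¬ A u ∧ l u < d) ∧
      (∀ u v, A u → ¬ A v → T.dist u v = l u + l v + 1) ∧
      (∀ u v, (A u ↔ A v) → T.dist u v ≤ l u + l v) ∧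
      (∀ u, ecc T u = l u + d + 1) := by
  classical
  obtain ⟨d, hd⟩ := hodd
  have hne : Nonempty V := Fintype.card_pos_iff.mp (by omega)
  obtain ⟨⟨x, y⟩, -, hxy⟩ := Finset.exists_mem_eq_sup (Finset.univ : Finset (V × V))
    Finset.univ_nonempty (fun p : V × V => T.dist p.1 p.2)
  have hmax : ∀ u v, T.dist u v ≤ 2 * d + 1 := fun u v => by
    rw [← hd]
    exact Finset.le_sup (f := fun p : V × V => T.dist p.1 p.2) (Finset.mem_univ (u, v))
  have hxy' : T.dist x y = 2 * d + 1 := by rw [← hd]; exact hxy.symm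
  obtain ⟨p, hp⟩ := hT.connected.exists_walk_length_eq_dist x y
  have hce : T.Adj (p.getVert d) (p.getVert (d + 1)) := p.adj_getVert_succ (by omega)
  have hxc : T.dist x (p.getVert d) ≤ d :=
    (T.dist_le (p.take d)).trans (by rw [Walk.take_length]; omega)
  have hey : T.dist y (p.getVert (d + 1)) ≤ d := by
    rw [T.dist_comm]
    exact (T.dist_le (p.drop (d + 1))).trans (by rw [Walk.drop_length]; omega)
  generalize p.getVert d = c at *
  generalize p.getVert (d + 1) = e at *
  clear hp p
  have hc := dist_adj_cases T hT hce
  have hec : T.dist c e = 1 := dist_eq_one_iff_adj.mpr hce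
  have hec' : T.dist e c = 1 := dist_eq_one_iff_adj.mpr hce.symm
  have hcc : T.dist c c = 0 := T.dist_self
  have hee : T.dist e e = 0 := T.dist_self
  have tri := fun u v w => hT.connected.dist_triangle (u := u) (v := v) (w := w)
  have hyx := T.dist_comm (u := x) (v := y)
  have hex := T.dist_comm (u := e) (v := x)
  have hey' := T.dist_comm (u := e) (v := y)
  have hcy' := T.dist_comm (u := c) (v := y)
  have hxe : T.dist x e = d + 1 ∧ T.dist x c = d ∧ T.dist y c = d + 1 ∧ T.dist y e = d := by
    have := tri x e y
    have := tri x c y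
    have := hc x
    have := hc y
    omega
  obtain ⟨x1, x2, y1, y2⟩ := hxe
  have hcross : ∀ u v, T.dist u c < T.dist u e → ¬ T.dist v c < T.dist v e →
      T.dist u v = T.dist u c + T.dist v e + 1 := fun u v hu hv => by
    have := hc u
    have := hc v
    exact cross_dist T hT hce (by omega) (by omega)
  have hle : ∀ u, min (T.dist u c) (T.dist u e) ≤ d := by
    intro u
    by_cases hu : T.dist u c < T.dist u e
    · have := hcross u y hu (by omega)
      have := hmax u y
      omega
    · have := hcross x u (by omega) hu
      have := hmax x u
      omega
  have hX : ∀ u v, T.dist u c < T.dist u e → ¬ T.dist v c < T.dist v e →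
      T.dist u v = min (T.dist u c) (T.dist u e) + min (T.dist v c) (T.dist v e) + 1 := by
    intro u v hu hv
    rw [hcross u v hu hv]; omega
  have hS : ∀ u v, (T.dist u c < T.dist u e ↔ T.dist v c < T.dist v e) →
      T.dist u v ≤ min (T.dist u c) (T.dist u e) + min (T.dist v c) (T.dist v e) := by
    intro u v h
    have := tri u c v
    have := tri u e v
    have := T.dist_comm (u := c) (v := v)
    have := T.dist_comm (u := e) (v := v)
    omega
  have hd0 : 0 < d := by
    by_contra h0
    have hsub : (Finset.univ : Finset V) ⊆ {c, e} := by
      intro u _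
      have := hle u
      have : T.dist u c = 0 ∨ T.dist u e = 0 := by omega
      simpa [hT.connected.dist_eq_zero_iff] using this
    have := (Finset.card_le_card hsub).trans Finset.card_le_two
    rw [Finset.card_univ] at this
    omega
  refine ⟨d, fun u => T.dist u c < T.dist u e, fun u => min (T.dist u c) (T.dist u e), hle,
    ⟨x, by beta_reduce; omega, by beta_reduce; omega⟩, ⟨y, by beta_reduce; omega, by beta_reduce; omega⟩, ⟨c, by beta_reduce; omega, by beta_reduce; omega⟩,
    ⟨e, by beta_reduce; omega, by beta_reduce; omega⟩, hX, hS, ?_⟩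
  intro u
  beta_reduce
  apply le_antisymm
  · refine Finset.sup_le fun v _ => ?_
    have := hle v
    have := hS u v
    have := hX u v
    have := hX v u
    have := T.dist_comm (u := u) (v := v)
    omega
  · by_cases hu : T.dist u c < T.dist u e
    · have := hX u y hu (by omega)
      have : T.dist u y ≤ ecc T u := Finset.le_sup (f := fun v => T.dist u v) (Finset.mem_univ y)
      omega
    · have := hX x u (by omega) hu
      have := T.dist_comm (u := u) (v := x)
      have : T.dist u x ≤ ecc T u := Finset.le_sup (f := fun v => T.dist u v) (Finset.mem_univ x)
      omega

/-- A tree on `n ≥ 5` vertices with odd diameter has exactly five distinct eigenvalues of its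
eccentricity matrix. -/
theorem stmt6 {V : Type*} [Fintype V] [DecidableEq V] (T : SimpleGraph V) (n : ℕ)
    (hT : T.IsTree) (hn : Fintype.card V = n) (h5 : 5 ≤ n) (hodd : Odd (gdiam T)) :
    (eccMatrix T).charpoly.roots.toFinset.card = 5 := by
  classical
  obtain ⟨d, A, l, hl, ⟨x1, hx1, hx1'⟩, ⟨x2, hx2, hx2'⟩, ⟨x3, hx3, hx3'⟩, ⟨x4, hx4, hx4'⟩,
    hX, hS, hecc⟩ := exists_levels T hT (by omega) hodd
  let p : V → ℝ := fun u => if A u ∧ l u = d then 1 else 0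
  let q : V → ℝ := fun u => if ¬ A u ∧ l u = d then 1 else 0
  let v : V → ℝ := fun u => if A u ∧ l u < d then (l u : ℝ) + d + 1 else 0
  let w : V → ℝ := fun u => if ¬ A u ∧ l u < d then (l u : ℝ) + d + 1 else 0
  let D : ℝ := 2 * d + 1
  have hE : ∀ i j, eccMatrix T i j = D * (p i * q j + q i * p j) + p i * w j + w i * p j
      + v i * q j + q i * v j := by
    intro i j
    have hi := hl i
    have hj := hl j
    simp only [eccMatrix, of_apply, hecc, p, q, v, w, D]
    have hsame : (A i ↔ A j) → ¬ T.dist i j = min (l i + d + 1) (l j + d + 1) := by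
      intro h
      have := hS i j h
      omega
    have hdiff : ¬ (A i ↔ A j) → T.dist i j = l i + l j + 1 := by
      intro h
      by_cases hA : A i
      · exact hX i j hA (by tauto)
      · rw [T.dist_comm, hX j i (by tauto) hA]; omega
    by_cases hAi : A i <;> by_cases hAj : A j
    · rw [if_neg (hsame (by tauto))]; simp [hAi, hAj]
    · rw [hdiff (by tauto)]
      rcases hi.lt_or_eq with h1 | h1 <;> rcases hj.lt_or_eq with h2 | h2
      · rw [if_neg (by omega)]; simp [hAi, hAj, h1.ne, h2.ne]
      · rw [if_pos (by omega)]; simp [hAi, hAj, h1.ne, h1, h2]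
      · rw [if_pos (by omega)]; simp [hAi, hAj, h2.ne, h1, h2]; ring
      · rw [if_pos (by omega)]; simp [hAi, hAj, h1, h2]; ring
    · rw [hdiff (by tauto)]
      rcases hi.lt_or_eq with h1 | h1 <;> rcases hj.lt_or_eq with h2 | h2
      · rw [if_neg (by omega)]; simp [hAi, hAj, h1.ne, h2.ne]
      · rw [if_pos (by omega)]; simp [hAi, hAj, h1.ne, h1, h2]
      · rw [if_pos (by omega)]; simp [hAi, hAj, h2.ne, h1, h2]; ring
      · rw [if_pos (by omega)]; simp [hAi, hAj, h1, h2]; ring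
    · rw [if_neg (hsame (by tauto))]; simp [hAi, hAj]
  have pos : ∀ (f : V → ℝ) (u : V), 0 < f u → 0 < f ⬝ᵥ f := fun f u hu =>
    Finset.sum_pos' (fun i _ => mul_self_nonneg _) ⟨u, Finset.mem_univ u, mul_pos hu hu⟩
  have zer : ∀ (f g : V → ℝ), (∀ u, f u * g u = 0) → f ⬝ᵥ g = 0 := fun f g h =>
    Finset.sum_eq_zero fun i _ => h i
  have hp : 0 < p ⬝ᵥ p := pos p x1 (by simp [p, hx1, hx1'])
  have hq : 0 < q ⬝ᵥ q := pos q x2 (by simp [q, hx2, hx2'])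
  have hv : 0 < v ⬝ᵥ v := pos v x3 (by simp only [v, hx3, hx3', true_and, if_true]; positivity)
  have hw : 0 < w ⬝ᵥ w := pos w x4 (by
    simp only [w, hx4, hx4', not_false_eq_true, true_and, if_true]; positivity)
  have hD : 0 < D := by positivity
  have hpq : p ⬝ᵥ q = 0 := zer _ _ fun u => by simp only [p, q]; split_ifs <;> simp_all
  have hpv : p ⬝ᵥ v = 0 := zer _ _ fun u => by simp only [p, v]; split_ifs <;> first | omega | simp
  have hpw : p ⬝ᵥ w = 0 := zer _ _ fun u => by simp only [p, w]; split_ifs <;> first | omega | simp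
  have hqv : q ⬝ᵥ v = 0 := zer _ _ fun u => by simp only [q, v]; split_ifs <;> first | omega | simp
  have hqw : q ⬝ᵥ w = 0 := zer _ _ fun u => by simp only [q, w]; split_ifs <;> first | omega | simp
  have hvw : v ⬝ᵥ w = 0 := zer _ _ fun u => by simp only [v, w]; split_ifs <;> simp_all
  refine quartic (p ⬝ᵥ p) (q ⬝ᵥ q) (v ⬝ᵥ v) (w ⬝ᵥ w) D hD hp hq hv hw _ fun μ => ?_
  rw [mem_roots_charpoly]
  by_cases hμ : μ = 0
  · subst hμ
    simp only [zero_smul, true_or, iff_true]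
    exact alg_zero _ p q v w D (by omega) hE
  · rw [alg_nonzero _ p q v w D _ _ _ _ hD hp hE rfl rfl rfl rfl hw hpq hpv hpw hqv hqw hvw μ hμ]
    simp [hμ]
end

section
/- Let T be a tree on n vertices with odd diameter, where 4 ≤ n ≤ 15, and let ξ_n(T) denote the smallest eigenvalue of the eccentricity matrix 𝓔(T). Then ξ_n(T) ≤ −√((13n−35+√((13n−35)²−64(n−3)))/2), with equality if and only if T is isomorphic to T_{n,3}^{0,n−4}. -/
open SimpleGraph Finset Matrix Polynomial

/-- The least eigenvalue of a real matrix, as the infimum of the real roots of its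
characteristic polynomial. -/
noncomputable def minEig {m : Type*} [Fintype m] [DecidableEq m] (M : Matrix m m ℝ) : ℝ :=
  sInf {x : ℝ | M.charpoly.IsRoot x}

/-- The tree `T_{n,d}^{a,b}`: the path `v₀v₁⋯v_d` together with `a` pendant vertices attached
to `v_{(d-1)/2}` and `b` pendant vertices attached to `v_{(d+1)/2}`. -/
def Tndab (d a b : ℕ) : SimpleGraph (Fin (d+1) ⊕ Fin a ⊕ Fin b) :=
  SimpleGraph.fromRel (fun x y =>
    (∃ i : Fin d, x = Sum.inl i.castSucc ∧ y = Sum.inl i.succ) ∨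
    (∃ j : Fin a, x = Sum.inl ⟨(d-1)/2, by omega⟩ ∧ y = Sum.inr (Sum.inl j)) ∨
    (∃ j : Fin b, x = Sum.inl ⟨(d+1)/2, by omega⟩ ∧ y = Sum.inr (Sum.inr j)))

/-! ### Linear algebra: the least eigenvalue -/

lemma root_iff {V : Type*} [Fintype V] [DecidableEq V] (E : Matrix V V ℝ) (x : ℝ) :
    E.charpoly.IsRoot x ↔ ∃ v : V → ℝ, v ≠ 0 ∧ E *ᵥ v = x • v := by
  rw [Polynomial.IsRoot.def, Matrix.eval_charpoly, ← Matrix.exists_mulVec_eq_zero_iff]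
  refine exists_congr fun v => and_congr_right fun _ => ?_
  have : (Matrix.scalar V x) *ᵥ v = x • v := by
    ext i; simp [Matrix.scalar_apply, Matrix.mulVec_diagonal]
  rw [Matrix.sub_mulVec, sub_eq_zero, this]
  exact eq_comm

lemma roots_finite {V : Type*} [Fintype V] [DecidableEq V] (E : Matrix V V ℝ) :
    {x : ℝ | E.charpoly.IsRoot x}.Finite :=
  Polynomial.finite_setOfPred_isRoot (E.charpoly_monic.ne_zero)

lemma minEig_lt {V : Type*} [Fintype V] [DecidableEq V] (E : Matrix V V ℝ)
    (hE : E.IsHermitian) (t : ℝ) (y : V → ℝ) (hy : y ⬝ᵥ (E *ᵥ y) < t * (y ⬝ᵥ y)) :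
    minEig E < t := by
  have hA : (E - t • (1 : Matrix V V ℝ)).IsHermitian := by
    refine hE.sub ?_
    simp [Matrix.IsHermitian, Matrix.conjTranspose_smul]
  have hn : ¬ (E - t • (1 : Matrix V V ℝ)).PosSemidef := by
    intro h
    have := h.dotProduct_mulVec_nonneg y
    simp only [Matrix.sub_mulVec, Matrix.smul_mulVec, Matrix.one_mulVec, star_trivial,
      dotProduct_sub, dotProduct_smul, smul_eq_mul] at this
    linarith
  rw [hA.posSemidef_iff_eigenvalues_nonneg] at hn
  have : ∃ i, hA.eigenvalues i < 0 := by
    by_contra hc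
    push Not at hc
    exact hn fun i => hc i
  obtain ⟨i, hi⟩ := this
  have hv := hA.mulVec_eigenvectorBasis i
  have hr : E.charpoly.IsRoot (hA.eigenvalues i + t) := by
    rw [root_iff]
    refine ⟨(hA.eigenvectorBasis i).ofLp, ?_, ?_⟩
    · intro h0
      have := hA.eigenvectorBasis.orthonormal.ne_zero i
      exact this (by ext j; exact congrFun h0 j)
    · simp only [Matrix.sub_mulVec, Matrix.smul_mulVec, Matrix.one_mulVec] at hv
      rw [add_smul, ← hv]
      abel
  have := csInf_le (roots_finite E).bddBelow hr
  unfold minEig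
  linarith

lemma minEig_eq {V : Type*} [Fintype V] [DecidableEq V] (E : Matrix V V ℝ)
    (t : ℝ) (h : ∀ y : V → ℝ, t * (y ⬝ᵥ y) ≤ y ⬝ᵥ (E *ᵥ y))
    (v : V → ℝ) (hv0 : v ≠ 0) (hv : E *ᵥ v = t • v) : minEig E = t := by
  apply IsLeast.csInf_eq
  refine ⟨(root_iff E t).2 ⟨v, hv0, hv⟩, ?_⟩
  intro x hx
  obtain ⟨w, hw0, hw⟩ := (root_iff E x).1 hx
  have h1 := h w
  rw [hw, dotProduct_smul, smul_eq_mul] at h1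
  have h2 : 0 < w ⬝ᵥ w := by
    have := dotProduct_star_self_pos_iff.2 hw0
    simpa using this
  exact le_of_mul_le_mul_right h1 h2

/-- Quadratic form of a symmetric matrix supported on `A × Aᶜ`. -/
lemma quad_bip {V : Type*} [Fintype V] [DecidableEq V] (E : Matrix V V ℝ)
    (hs : ∀ u v, E u v = E v u) (A : Finset V)
    (h1 : ∀ u ∈ A, ∀ v ∈ A, E u v = 0) (h2 : ∀ u ∈ Aᶜ, ∀ v ∈ Aᶜ, E u v = 0) (y : V → ℝ) :
    y ⬝ᵥ (E *ᵥ y) = 2 * ∑ u ∈ A, y u * ∑ v ∈ Aᶜ, E u v * y v := by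
  have e : y ⬝ᵥ (E *ᵥ y) = ∑ u, y u * ∑ v, E u v * y v := rfl
  rw [e, ← Finset.sum_add_sum_compl A]
  have e1 : ∑ u ∈ A, y u * ∑ v, E u v * y v = ∑ u ∈ A, y u * ∑ v ∈ Aᶜ, E u v * y v := by
    refine Finset.sum_congr rfl fun u hu => ?_
    rw [← Finset.sum_add_sum_compl A, Finset.sum_eq_zero (s := A), zero_add]
    intro v hv; rw [h1 u hu v hv, zero_mul]
  have e2 : ∑ u ∈ Aᶜ, y u * ∑ v, E u v * y v = ∑ u ∈ Aᶜ, y u * ∑ v ∈ A, E u v * y v := by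
    refine Finset.sum_congr rfl fun u hu => ?_
    rw [← Finset.sum_add_sum_compl A, Finset.sum_eq_zero (s := Aᶜ), add_zero]
    intro v hv; rw [h2 u hu v hv, zero_mul]
  have e3 : ∑ u ∈ Aᶜ, y u * ∑ v ∈ A, E u v * y v = ∑ u ∈ A, y u * ∑ v ∈ Aᶜ, E u v * y v := by
    simp_rw [Finset.mul_sum]
    rw [Finset.sum_comm]
    refine Finset.sum_congr rfl fun u _ => Finset.sum_congr rfl fun v _ => ?_
    rw [hs v u]; ring
  rw [e1, e2, e3]; ring

/-- Rayleigh bound for bipartite matrices: test vector `f` on `A` and `-f` off `A`. -/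
lemma minEig_lt_bip {V : Type*} [Fintype V] [DecidableEq V] (E : Matrix V V ℝ)
    (hs : ∀ u v, E u v = E v u) (A : Finset V)
    (h1 : ∀ u ∈ A, ∀ v ∈ A, E u v = 0) (h2 : ∀ u ∈ Aᶜ, ∀ v ∈ Aᶜ, E u v = 0)
    (t : ℝ) (f : V → ℝ)
    (h : t * (∑ u ∈ A, f u ^ 2 + ∑ v ∈ Aᶜ, f v ^ 2)
      < 2 * ∑ u ∈ A, f u * ∑ v ∈ Aᶜ, E u v * f v) :
    minEig E < -t := by
  have hE : E.IsHermitian := by ext u v; simp [hs v u]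
  refine minEig_lt E hE (-t) (fun x => if x ∈ A then f x else - f x) ?_
  rw [quad_bip E hs A h1 h2]
  have e1 : ∑ u ∈ A, (if u ∈ A then f u else -f u) *
      ∑ v ∈ Aᶜ, E u v * (if v ∈ A then f v else -f v)
      = - ∑ u ∈ A, f u * ∑ v ∈ Aᶜ, E u v * f v := by
    rw [← Finset.sum_neg_distrib]
    refine Finset.sum_congr rfl fun u hu => ?_
    rw [if_pos hu, ← mul_neg, ← Finset.sum_neg_distrib]
    congr 1
    refine Finset.sum_congr rfl fun v hv => ?_
    rw [if_neg (Finset.mem_compl.1 hv)]; ring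
  have e2 : (fun x => if x ∈ A then f x else - f x) ⬝ᵥ (fun x => if x ∈ A then f x else - f x)
      = ∑ u ∈ A, f u ^ 2 + ∑ v ∈ Aᶜ, f v ^ 2 := by
    rw [Finset.sum_add_sum_compl]
    refine Finset.sum_congr rfl fun u _ => ?_
    dsimp only
    split_ifs <;> ring
  rw [e2, e1]
  linarith

/-! ### Trees: structure around the central edge -/

lemma tree_dist_cases {V : Type*} {T : SimpleGraph V} (hT : T.IsTree) {a b : V}
    (h : T.Adj a b) (x : V) : T.dist x a = T.dist x b + 1 ∨ T.dist x b = T.dist x a + 1 := by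
  have h1 := hT.dist_ne_of_adj x h
  have h2 := hT.connected.dist_triangle (u := x) (v := a) (w := b)
  have h3 := hT.connected.dist_triangle (u := x) (v := b) (w := a)
  have h4 : T.dist a b = 1 := dist_eq_one_iff_adj.2 h
  have h5 : T.dist b a = 1 := dist_eq_one_iff_adj.2 h.symm
  omega

lemma reach_del {V : Type*} [DecidableEq V] {T : SimpleGraph V} (hT : T.IsTree) {a b u : V}
    (hu : T.dist u b = T.dist u a + 1) : ∃ p : T.Walk u a, s(a, b) ∉ p.edges := by
  obtain ⟨p, hp⟩ := hT.connected.exists_walk_length_eq_dist u a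
  refine ⟨p, fun hm => ?_⟩
  have hb := p.snd_mem_support_of_mem_edges hm
  have h1 := dist_le (p.takeUntil b hb)
  have h2 := p.length_takeUntil_le_length hb
  omega

lemma tree_dist_across {V : Type*} [DecidableEq V] {T : SimpleGraph V} (hT : T.IsTree)
    {a b u v : V} (h : T.Adj a b)
    (hu : T.dist u b = T.dist u a + 1) (hv : T.dist v a = T.dist v b + 1) :
    T.dist u v = T.dist u a + 1 + T.dist v b := by
  obtain ⟨p, hp⟩ := hT.connected.exists_walk_length_eq_dist u v
  obtain ⟨q1, h1⟩ := reach_del hT hu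
  obtain ⟨q2, h2⟩ := reach_del hT hv
  have hbr := isBridge_iff_forall_walk_mem_edges.1
    (isAcyclic_iff_forall_adj_isBridge.1 hT.isAcyclic h) ((q1.reverse.append p).append q2)
  have hm : s(a, b) ∈ p.edges := by
    simp only [Walk.edges_append, Walk.edges_reverse, List.mem_append, List.mem_reverse] at hbr
    rw [Sym2.eq_swap] at h2
    tauto
  have ha := p.fst_mem_support_of_mem_edges hm
  have e := congrArg Walk.length (p.take_spec ha)
  rw [Walk.length_append] at e
  have d1 := dist_le (p.takeUntil a ha)
  have d2 := dist_le (p.dropUntil a ha)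
  have d3 := hT.connected.dist_triangle (u := u) (v := a) (w := v)
  rw [dist_comm (u := a)] at d2 d3
  omega

/-- `a b` is the central edge of a tree of diameter `2r+1`; `u`, `w` are opposite deepest
vertices. -/
structure Ctr {V : Type*} (T : SimpleGraph V) (a b u w : V) (r : ℕ) : Prop where
  tree : T.IsTree
  adj : T.Adj a b
  hu : T.dist u a = r
  hu' : T.dist u b = r + 1
  hw : T.dist w b = r
  hw' : T.dist w a = r + 1
  all : ∀ x, T.dist x a ≤ r ∧ T.dist x b = T.dist x a + 1 ∨
    T.dist x b ≤ r ∧ T.dist x a = T.dist x b + 1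

lemma Ctr.swap {V : Type*} {T : SimpleGraph V} {a b u w : V} {r : ℕ} (h : Ctr T a b u w r) :
    Ctr T b a w u r :=
  ⟨h.tree, h.adj.symm, h.hw, h.hw', h.hu, h.hu', fun x => (h.all x).symm⟩

lemma exists_ctr {V : Type*} [Fintype V] [DecidableEq V] {T : SimpleGraph V} (hT : T.IsTree)
    (hodd : Odd (gdiam T)) : ∃ a b u w r, Ctr T a b u w r := by
  obtain ⟨r, hr⟩ := hodd
  have hne : (Finset.univ : Finset (V × V)).Nonempty := by
    obtain ⟨x⟩ := hT.connected.nonempty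
    exact ⟨(x, x), Finset.mem_univ _⟩
  obtain ⟨⟨u, w⟩, -, huw⟩ := Finset.exists_mem_eq_sup _ hne (fun p : V × V => T.dist p.1 p.2)
  have hmax : ∀ x y, T.dist x y ≤ 2 * r + 1 := fun x y => by
    rw [← hr]
    exact Finset.le_sup (f := fun p : V × V => T.dist p.1 p.2) (Finset.mem_univ (x, y))
  have huw' : T.dist u w = 2 * r + 1 := by rw [← hr]; exact huw.symm
  obtain ⟨p, hp⟩ := hT.connected.exists_walk_length_eq_dist u w
  set a := p.getVert r with ha
  set b := p.getVert (r + 1) with hb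
  have hab : T.Adj a b := p.adj_getVert_succ (by omega)
  have l1 := dist_le (p.take r)
  have l2 := dist_le (p.drop r)
  have l3 := dist_le (p.take (r+1))
  have l4 := dist_le (p.drop (r+1))
  simp only [Walk.take_length, Walk.drop_length] at l1 l2 l3 l4
  rw [← ha] at l1 l2
  rw [← hb] at l3 l4
  have t1 := hT.connected.dist_triangle (u := u) (v := a) (w := w)
  have t2 := hT.connected.dist_triangle (u := u) (v := b) (w := w)
  rw [dist_comm (u := a) (v := w)] at *
  rw [dist_comm (u := b) (v := w)] at *
  have hua : T.dist u a = r := by omega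
  have hub : T.dist u b = r + 1 := by omega
  have hwa : T.dist w a = r + 1 := by omega
  have hwb : T.dist w b = r := by omega
  refine ⟨a, b, u, w, r, hT, hab, hua, hub, hwb, hwa, fun x => ?_⟩
  rcases tree_dist_cases hT hab x with h | h
  · right
    have := tree_dist_across hT hab (u := u) (v := x) (by omega) h
    have := hmax u x
    omega
  · left
    have := tree_dist_across hT hab (u := x) (v := w) h (by omega)
    have := hmax x w
    omega

section
variable {V : Type*} [Fintype V] [DecidableEq V] {T : SimpleGraph V} {a b u w : V} {r : ℕ}

/-- The side of the central edge containing `a`. -/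
noncomputable def sideA (T : SimpleGraph V) (a b : V) : Finset V :=
  Finset.univ.filter fun x => T.dist x b = T.dist x a + 1

lemma mem_sideA (x : V) : x ∈ sideA T a b ↔ T.dist x b = T.dist x a + 1 := by simp [sideA]

lemma Ctr.compl (h : Ctr T a b u w r) : (sideA T a b)ᶜ = sideA T b a := by
  ext x
  rw [Finset.mem_compl, mem_sideA, mem_sideA]
  have := h.all x
  omega

lemma Ctr.le (h : Ctr T a b u w r) {x : V} (hx : x ∈ sideA T a b) : T.dist x a ≤ r := by
  rw [mem_sideA] at hx
  have := h.all x
  omega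

lemma Ctr.across (h : Ctr T a b u w r) {x y : V} (hx : x ∈ sideA T a b) (hy : y ∈ sideA T b a) :
    T.dist x y = T.dist x a + 1 + T.dist y b :=
  tree_dist_across h.tree h.adj ((mem_sideA _).1 hx) ((mem_sideA _).1 hy)

lemma Ctr.mem_u (h : Ctr T a b u w r) : u ∈ sideA T a b := by
  rw [mem_sideA, h.hu, h.hu']

lemma Ctr.mem_w (h : Ctr T a b u w r) : w ∈ sideA T b a := h.swap.mem_u

lemma Ctr.mem_a (h : Ctr T a b u w r) : a ∈ sideA T a b := by
  rw [mem_sideA, dist_self, dist_eq_one_iff_adj.2 h.adj]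

lemma Ctr.same (h : Ctr T a b u w r) {x y : V} (hx : x ∈ sideA T a b) (hy : y ∈ sideA T a b) :
    T.dist x y ≤ T.dist x a + T.dist y a := by
  have := h.tree.connected.dist_triangle (u := x) (v := a) (w := y)
  rwa [dist_comm (u := a)] at this

lemma Ctr.mem_or (h : Ctr T a b u w r) (x : V) : x ∈ sideA T a b ∨ x ∈ sideA T b a := by
  rw [← h.compl, Finset.mem_compl]; tauto

lemma Ctr.ecc (h : Ctr T a b u w r) {x : V} (hx : x ∈ sideA T a b) :
    ecc T x = T.dist x a + 1 + r := by
  apply le_antisymm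
  · refine Finset.sup_le fun y _ => ?_
    rcases h.mem_or y with hy | hy
    · have := h.same hx hy
      have := h.le hy
      omega
    · rw [h.across hx hy]
      have := h.swap.le hy
      omega
  · have := h.across hx h.mem_w
    rw [h.hw] at this
    rw [← this]
    exact Finset.le_sup (f := fun v => T.dist x v) (Finset.mem_univ w)

lemma Ctr.E_same (h : Ctr T a b u w r) {x y : V} (hx : x ∈ sideA T a b) (hy : y ∈ sideA T a b) :
    eccMatrix T x y = 0 := by
  have h1 := h.same hx hy
  have h2 := h.le hx
  have h3 := h.le hy
  simp only [eccMatrix, Matrix.of_apply, h.ecc hx, h.ecc hy]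
  rw [if_neg]
  omega

lemma Ctr.E_across (h : Ctr T a b u w r) {x y : V} (hx : x ∈ sideA T a b)
    (hy : y ∈ sideA T b a) :
    eccMatrix T x y = if T.dist x a = r ∨ T.dist y b = r then
      (T.dist x a : ℝ) + 1 + T.dist y b else 0 := by
  have h2 := h.le hx
  have h3 := h.swap.le hy
  simp only [eccMatrix, Matrix.of_apply, h.ecc hx, h.swap.ecc hy, h.across hx hy]
  by_cases hc : T.dist x a = r ∨ T.dist y b = r
  · rw [if_pos hc, if_pos]
    · push_cast; ring
    · omega
  · rw [if_neg hc, if_neg]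
    omega

lemma E_symm (T : SimpleGraph V) (x y : V) : eccMatrix T x y = eccMatrix T y x := by
  simp only [eccMatrix, Matrix.of_apply, dist_comm (u := x), min_comm (ecc T x)]

lemma Ctr.lt_bip (h : Ctr T a b u w r) (t : ℝ) (f : V → ℝ)
    (H : t * (∑ x ∈ sideA T a b, f x ^ 2 + ∑ y ∈ sideA T b a, f y ^ 2)
      < 2 * ∑ x ∈ sideA T a b, f x * ∑ y ∈ sideA T b a, eccMatrix T x y * f y) :
    minEig (eccMatrix T) < -t := by
  rw [← h.compl] at H
  refine minEig_lt_bip _ (E_symm T) (sideA T a b) (fun x hx y hy => h.E_same hx hy) ?_ t f H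
  rw [h.compl]
  exact fun x hx y hy => h.swap.E_same hx hy

end

section
variable {V : Type*} [Fintype V] [DecidableEq V] {T : SimpleGraph V} {a b u w : V} {r : ℕ}

lemma Ctr.one_le (h : Ctr T a b u w r) {x : V} (hx : x ≠ a) : 1 ≤ T.dist x a :=
  h.tree.connected.pos_dist_of_ne hx

lemma Ctr.card (h : Ctr T a b u w r) :
    (sideA T a b).card + (sideA T b a).card = Fintype.card V := by
  rw [← h.compl, Finset.card_add_card_compl]

lemma sum_erase2 (A : Finset V) {a u : V} (ha : a ∈ A) (hu : u ∈ A) (hau : a ≠ u) (g : V → ℝ) :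
    ∑ x ∈ A, g x = g u + g a + ∑ x ∈ (A.erase u).erase a, g x := by
  rw [← Finset.add_sum_erase A g hu,
    ← Finset.add_sum_erase (A.erase u) g (Finset.mem_erase.2 ⟨hau, ha⟩), add_assoc]

lemma card_erase2 (A : Finset V) {a u : V} (ha : a ∈ A) (hu : u ∈ A) (hau : a ≠ u) :
    (((A.erase u).erase a).card : ℝ) = A.card - 2 := by
  have h1 := Finset.card_erase_add_one hu
  have h2 := Finset.card_erase_add_one (Finset.mem_erase.2 ⟨hau, ha⟩)
  have : ((A.erase u).erase a).card + 2 = A.card := by omega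
  rw [← this]; push_cast; ring

lemma Ctr.half (h : Ctr T a b u w r) (hr : 2 ≤ r) {τ : ℝ} (hτ : 0 < τ) {f : V → ℝ}
    (hfa : f a = 3 / τ) (hfu : f u = 1)
    (hfo : ∀ x ∈ sideA T a b, x ≠ u → x ≠ a → f x = 4 / τ) :
    (∑ x ∈ sideA T a b, f x ^ 2 = 1 + (16 * (sideA T a b).card - 23) / τ ^ 2) ∧
    2 * r + 1 + (16 * (sideA T a b).card - 23) / τ ≤ ∑ x ∈ sideA T a b, f x * eccMatrix T x w := by
  have hau : a ≠ u := by
    rintro rfl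
    have := h.hu
    rw [dist_self] at this
    omega
  have hr' : (2 : ℝ) ≤ r := by exact_mod_cast hr
  have hE : ∀ x ∈ sideA T a b, eccMatrix T x w = (T.dist x a : ℝ) + 1 + r := fun x hx => by
    rw [h.E_across hx h.mem_w, if_pos (Or.inr h.hw), h.hw]
  have hcard := card_erase2 _ h.mem_a h.mem_u hau
  constructor
  · rw [sum_erase2 _ h.mem_a h.mem_u hau, hfu, hfa,
      Finset.sum_congr rfl (g := fun _ => (4 / τ) ^ 2), Finset.sum_const, nsmul_eq_mul, hcard]
    · field_simp; ring
    · intro x hx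
      simp only [Finset.mem_erase] at hx
      rw [hfo x hx.2.2 hx.2.1 hx.1]
  · rw [sum_erase2 _ h.mem_a h.mem_u hau, hfu, hfa, hE u h.mem_u, hE a h.mem_a, h.hu, dist_self]
    have hle : ∑ x ∈ ((sideA T a b).erase u).erase a, (16 / τ)
        ≤ ∑ x ∈ ((sideA T a b).erase u).erase a, f x * eccMatrix T x w := by
      refine Finset.sum_le_sum fun x hx => ?_
      simp only [Finset.mem_erase] at hx
      rw [hfo x hx.2.2 hx.2.1 hx.1, hE x hx.2.2]
      have h1 : (1 : ℝ) ≤ T.dist x a := by exact_mod_cast h.one_le hx.1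
      rw [div_mul_eq_mul_div]
      gcongr
      linarith
    rw [Finset.sum_const, nsmul_eq_mul, hcard] at hle
    have h3 : 9 / τ ≤ 3 / τ * (((0 : ℕ) : ℝ) + 1 + r) := by
      rw [div_mul_eq_mul_div]
      gcongr
      push_cast
      linarith
    have e : (16 * ((sideA T a b).card : ℝ) - 23) / τ
      = 9 / τ + ((sideA T a b).card - 2) * (16 / τ) := by field_simp; ring
    rw [e]
    linarith

lemma Ctr.case_big (h : Ctr T a b u w r) (hr : 2 ≤ r) {n : ℕ} (hn : Fintype.card V = n)
    (h4 : 4 ≤ n) (h15 : n ≤ 15) : minEig (eccMatrix T) < -Real.sqrt (13 * n - 35) := by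
  have h4' : (4 : ℝ) ≤ n := by exact_mod_cast h4
  have h15' : (n : ℝ) ≤ 15 := by exact_mod_cast h15
  have hs : (0 : ℝ) < 13 * n - 35 := by linarith
  set τ := Real.sqrt (13 * n - 35) with hτdef
  have hτ : 0 < τ := Real.sqrt_pos.2 hs
  have hτ2 : τ ^ 2 = 13 * n - 35 := Real.sq_sqrt hs.le
  have hcard : ((sideA T a b).card : ℝ) + (sideA T b a).card = n := by
    rw [← hn]; exact_mod_cast h.card
  have hd : ∀ {x y}, x ∈ sideA T a b → y ∈ sideA T b a → x ≠ y := by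
    rintro x y hx hy rfl
    rw [mem_sideA] at hx hy
    omega
  have hau : a ≠ u := by
    rintro rfl
    have := h.hu
    rw [dist_self] at this
    omega
  have hbw : b ≠ w := by
    rintro rfl
    have := h.hw
    rw [dist_self] at this
    omega
  set f : V → ℝ := fun x => if x = u ∨ x = w then 1 else if x = a ∨ x = b then 3 / τ else 4 / τ
    with hf
  have f0 : ∀ x, 0 ≤ f x := by
    intro x; simp only [hf]; split_ifs <;> positivity
  have fu : f u = 1 := by simp [hf]
  have fw : f w = 1 := by simp [hf]
  have fa : f a = 3 / τ := by simp [hf, hau, hd h.mem_a h.mem_w]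
  have fb : f b = 3 / τ := by simp [hf, hbw, (hd h.mem_u h.swap.mem_a).symm]
  obtain ⟨sA, eA⟩ := h.half hr hτ fa fu (fun x hx h1 h2 => by
    simp [hf, h1, h2, hd hx h.mem_w, hd hx h.swap.mem_a])
  obtain ⟨sB, eB⟩ := h.swap.half hr hτ fb fw (fun x hx h1 h2 => by
    simp [hf, h1, h2, (hd h.mem_u hx).symm, (hd h.mem_a hx).symm])
  have E0 : ∀ x y, 0 ≤ eccMatrix T x y := by
    intro x y
    simp only [eccMatrix, Matrix.of_apply]
    split_ifs <;> positivity
  have huw : eccMatrix T u w = 2 * r + 1 := by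
    rw [h.E_across h.mem_u h.mem_w, if_pos (Or.inr h.hw), h.hw, h.hu]; ring
  have hr' : (2 : ℝ) ≤ r := by exact_mod_cast hr
  have key : 5 + (16 * (n : ℝ) - 46) / τ ≤
      ∑ x ∈ sideA T a b, f x * ∑ y ∈ sideA T b a, eccMatrix T x y * f y := by
    rw [← Finset.add_sum_erase _ _ h.mem_u, fu, one_mul]
    have l1 : ∑ x ∈ (sideA T a b).erase u, f x * eccMatrix T x w ≤
        ∑ x ∈ (sideA T a b).erase u, f x * ∑ y ∈ sideA T b a, eccMatrix T x y * f y := by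
      refine Finset.sum_le_sum fun x _ => mul_le_mul_of_nonneg_left ?_ (f0 x)
      have := Finset.single_le_sum (f := fun y => eccMatrix T x y * f y)
        (fun y _ => mul_nonneg (E0 x y) (f0 y)) h.mem_w
      simpa [fw] using this
    have l2 : ∑ y ∈ sideA T b a, eccMatrix T u y * f y
        = ∑ y ∈ sideA T b a, f y * eccMatrix T y u :=
      Finset.sum_congr rfl fun y _ => by rw [E_symm T u y, mul_comm]
    rw [← Finset.add_sum_erase _ _ h.mem_u, fu, one_mul, huw] at eA
    rw [l2]
    have e : (16 * (n : ℝ) - 46) / τ = (16 * ((sideA T a b).card : ℝ) - 23) / τ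
        + (16 * ((sideA T b a).card : ℝ) - 23) / τ := by rw [← hcard]; field_simp; ring
    rw [e]
    linarith
  refine h.lt_bip τ f ?_
  rw [sA, sB]
  have e : τ * (1 + (16 * ((sideA T a b).card : ℝ) - 23) / τ ^ 2
      + (1 + (16 * ((sideA T b a).card : ℝ) - 23) / τ ^ 2)) = 2 * τ + (16 * n - 46) / τ := by
    rw [← hcard]; field_simp; ring
  rw [e]
  have : 2 * τ < 10 + (16 * (n : ℝ) - 46) / τ := by
    have h5 : (5 * (n : ℝ) - 12) < 5 * τ := by
      apply lt_of_pow_lt_pow_left₀ 2 (by positivity)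
      rw [mul_pow, hτ2]
      nlinarith
    have : 2 * τ ^ 2 < 10 * τ + (16 * n - 46) := by rw [hτ2]; linarith
    rw [← sub_pos]
    have e2 : 10 + (16 * (n : ℝ) - 46) / τ - 2 * τ = (10 * τ + (16 * n - 46) - 2 * τ ^ 2) / τ := by
      field_simp
    rw [e2]
    exact div_pos (by linarith) hτ
  linarith
end

section
variable {V : Type*} [Fintype V] [DecidableEq V] {T : SimpleGraph V} {a b u w : V} {r : ℕ}

lemma Ctr.dist_one (h : Ctr T a b u w 1) {x : V} (hx : x ∈ sideA T a b) (hxa : x ≠ a) :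
    T.dist x a = 1 := le_antisymm (h.le hx) (h.one_le hxa)

lemma Ctr.E_lb (h : Ctr T a b u w 1) {x : V} (hx : x ∈ sideA T a b) (hxa : x ≠ a) :
    eccMatrix T x b = 2 := by
  rw [h.E_across hx h.swap.mem_a, if_pos (Or.inl (h.dist_one hx hxa)), h.dist_one hx hxa, dist_self]
  norm_num

lemma Ctr.E_ll (h : Ctr T a b u w 1) {x y : V} (hx : x ∈ sideA T a b) (hxa : x ≠ a)
    (hy : y ∈ sideA T b a) (hyb : y ≠ b) : eccMatrix T x y = 3 := by
  rw [h.E_across hx hy, if_pos (Or.inl (h.dist_one hx hxa)), h.dist_one hx hxa,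
    h.swap.dist_one hy hyb]
  norm_num

lemma Ctr.E_ab (h : Ctr T a b u w 1) : eccMatrix T a b = 0 := by
  rw [h.E_across h.mem_a h.swap.mem_a, if_neg]
  simp

lemma card_erase1 (A : Finset V) {a : V} (ha : a ∈ A) :
    ((A.erase a).card : ℝ) = A.card - 1 := by
  rw [← Finset.card_erase_add_one ha]; push_cast; ring

lemma Ctr.case_mid (h : Ctr T a b u w 1) {n : ℕ} (hn : Fintype.card V = n)
    (hB : 3 ≤ (sideA T b a).card) (hAB : (sideA T b a).card ≤ (sideA T a b).card) :
    minEig (eccMatrix T) < -Real.sqrt (13 * n - 35) := by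
  have hcard : ((sideA T a b).card : ℝ) + (sideA T b a).card = n := by
    rw [← hn]; exact_mod_cast h.card
  have hB' : (3 : ℝ) ≤ (sideA T b a).card := by exact_mod_cast hB
  have hAB' : ((sideA T b a).card : ℝ) ≤ (sideA T a b).card := by exact_mod_cast hAB
  have cA := card_erase1 _ h.mem_a
  have cB := card_erase1 _ h.swap.mem_a
  set p : ℝ := (sideA T a b).card - 1 with hp
  set q : ℝ := (sideA T b a).card - 1 with hq
  have hnpq : (n : ℝ) = p + q + 2 := by rw [← hcard, hp, hq]; ring
  have hq2 : 2 ≤ q := by linarith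
  have hpq : q ≤ p := by linarith
  have hs : (0 : ℝ) < 13 * n - 35 := by linarith
  set τ := Real.sqrt (13 * n - 35) with hτdef
  have hτ : 0 < τ := Real.sqrt_pos.2 hs
  have hτ2 : τ ^ 2 = 13 * n - 35 := Real.sq_sqrt hs.le
  have hd : ∀ {x}, x ∈ sideA T a b → x ∉ sideA T b a := by
    intro x hx
    rw [mem_sideA] at hx ⊢
    omega
  have hd' : ∀ {x}, x ∈ sideA T b a → x ∉ sideA T a b := fun hx hx' => hd hx' hx
  set f : V → ℝ := fun x => if x ∈ sideA T a b then (if x = a then 0 else 1)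
    else if x = b then 2 * p / τ else 3 * p / τ with hf
  have fa : f a = 0 := by simp [hf, h.mem_a]
  have fb : f b = 2 * p / τ := by simp [hf, hd' h.swap.mem_a]
  have fA : ∀ x ∈ (sideA T a b).erase a, f x = 1 := by
    intro x hx
    rw [Finset.mem_erase] at hx
    simp [hf, hx.1, hx.2]
  have fB : ∀ x ∈ (sideA T b a).erase b, f x = 3 * p / τ := by
    intro x hx
    rw [Finset.mem_erase] at hx
    simp [hf, hx.1, hd' hx.2]
  have s1 : ∑ x ∈ sideA T a b, f x ^ 2 = p := by
    rw [← Finset.add_sum_erase _ _ h.mem_a, fa, Finset.sum_congr rfl (g := fun _ => (1 : ℝ)),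
      Finset.sum_const, nsmul_eq_mul, cA]
    · ring
    · intro x hx; rw [fA x hx]; ring
  have s2 : ∑ x ∈ sideA T b a, f x ^ 2 = p ^ 2 * (9 * q + 4) / τ ^ 2 := by
    rw [← Finset.add_sum_erase _ _ h.swap.mem_a, fb,
      Finset.sum_congr rfl (g := fun _ => (3 * p / τ) ^ 2),
      Finset.sum_const, nsmul_eq_mul, cB]
    · field_simp; ring
    · intro x hx; rw [fB x hx]
  have s3 : ∀ x ∈ (sideA T a b).erase a,
      ∑ y ∈ sideA T b a, eccMatrix T x y * f y = p * (9 * q + 4) / τ := by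
    intro x hx
    rw [Finset.mem_erase] at hx
    rw [← Finset.add_sum_erase _ _ h.swap.mem_a, fb, h.E_lb hx.2 hx.1,
      Finset.sum_congr rfl (g := fun _ => 3 * (3 * p / τ)),
      Finset.sum_const, nsmul_eq_mul, cB]
    · field_simp; ring
    · intro y hy
      rw [fB y hy]
      rw [Finset.mem_erase] at hy
      rw [h.E_ll hx.2 hx.1 hy.2 hy.1]
  have s4 : ∑ x ∈ sideA T a b, f x * ∑ y ∈ sideA T b a, eccMatrix T x y * f y
      = p * (p * (9 * q + 4) / τ) := by
    have s5 : ∑ x ∈ (sideA T a b).erase a, f x * ∑ y ∈ sideA T b a, eccMatrix T x y * f y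
        = ∑ x ∈ (sideA T a b).erase a, p * (9 * q + 4) / τ :=
      Finset.sum_congr rfl fun x hx => by rw [fA x hx, s3 x hx, one_mul]
    rw [← Finset.add_sum_erase _ _ h.mem_a, fa, s5, Finset.sum_const, nsmul_eq_mul, cA]
    ring
  refine h.lt_bip τ f ?_
  rw [s1, s2, s4]
  have hkey : τ ^ 2 < p * (9 * q + 4) := by
    rw [hτ2, hnpq]; nlinarith
  have hp0 : 0 < p := by linarith
  rw [← sub_pos]
  have e : 2 * (p * (p * (9 * q + 4) / τ)) - τ * (p + p ^ 2 * (9 * q + 4) / τ ^ 2)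
      = p * (p * (9 * q + 4) - τ ^ 2) / τ := by field_simp; ring
  rw [e]
  exact div_pos (mul_pos hp0 (by linarith)) hτ

lemma Ctr.case_eq (h : Ctr T a b u w 1) {q σ : ℝ} (hA : (sideA T a b).card = 2)
    (hq : ((sideA T b a).card : ℝ) = q + 1) (hq0 : 0 < q) (hσ : 0 < σ) (hσ4 : 4 < σ ^ 2)
    (heq : (σ ^ 2 - 4) * (σ ^ 2 - 4 * q) = 9 * q * σ ^ 2) :
    minEig (eccMatrix T) = -σ := by
  have hua : u ≠ a := by
    rintro rfl
    have := h.hu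
    rw [dist_self] at this
    omega
  have hAe : sideA T a b = {a, u} := by
    symm
    apply Finset.eq_of_subset_of_card_le
    · intro x hx
      simp only [Finset.mem_insert, Finset.mem_singleton] at hx
      rcases hx with rfl | rfl
      · exact h.mem_a
      · exact h.mem_u
    · rw [hA, Finset.card_pair hua.symm]
  have cB := card_erase1 _ h.swap.mem_a
  rw [hq, add_sub_cancel_right] at cB
  have hmB : ∀ x, x ∈ sideA T b a ↔ x ≠ a ∧ x ≠ u := by
    intro x
    rw [← h.compl, hAe]
    simp
  have sB : ∀ (x : V) (y : V → ℝ), (x = a → ∑ v ∈ sideA T b a, eccMatrix T x v * y v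
      = 2 * ∑ v ∈ (sideA T b a).erase b, y v) ∧
      (x = u → ∑ v ∈ sideA T b a, eccMatrix T x v * y v
      = 2 * y b + 3 * ∑ v ∈ (sideA T b a).erase b, y v) := by
    intro x y
    constructor
    · rintro rfl
      rw [← Finset.add_sum_erase _ _ h.swap.mem_a, h.E_ab, zero_mul, zero_add, Finset.mul_sum]
      refine Finset.sum_congr rfl fun v hv => ?_
      rw [Finset.mem_erase] at hv
      rw [E_symm, h.swap.E_lb hv.2 hv.1]
    · rintro rfl
      rw [← Finset.add_sum_erase _ _ h.swap.mem_a, h.E_lb h.mem_u hua, Finset.mul_sum]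
      congr 1
      refine Finset.sum_congr rfl fun v hv => ?_
      rw [Finset.mem_erase] at hv
      rw [h.E_ll h.mem_u hua hv.2 hv.1]
  apply minEig_eq _ _ _ (fun x => if x = u then -3 * q * σ / (σ ^ 2 - 4) else
    if x = a then -2 * q / σ else if x = b then 6 * q / (σ ^ 2 - 4) else 1)
  · intro h0
    have := congrFun h0 a
    simp only [if_neg hua.symm, if_true, Pi.zero_apply] at this
    have h1 : -2 * q / σ < 0 := div_neg_of_neg_of_pos (by linarith) hσ
    linarith
  · have hbu : b ≠ u := ((hmB b).1 h.swap.mem_a).2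
    have hba : b ≠ a := ((hmB b).1 h.swap.mem_a).1
    have h4 : σ ^ 2 - 4 ≠ 0 := by linarith
    set v : V → ℝ := (fun x => if x = u then -3 * q * σ / (σ ^ 2 - 4) else
      if x = a then -2 * q / σ else if x = b then 6 * q / (σ ^ 2 - 4) else 1) with hv
    have vu : v u = -3 * q * σ / (σ ^ 2 - 4) := by simp [hv]
    have va : v a = -2 * q / σ := by simp [hv, hua.symm]
    have vb : v b = 6 * q / (σ ^ 2 - 4) := by simp [hv, hbu, hba]
    have vo : ∀ x ∈ (sideA T b a).erase b, v x = 1 := by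
      intro x hx
      rw [Finset.mem_erase, hmB] at hx
      simp [hv, hx.1, hx.2.1, hx.2.2]
    have so : ∑ x ∈ (sideA T b a).erase b, v x = q := by
      rw [Finset.sum_congr rfl vo, Finset.sum_const, nsmul_eq_mul, cB, mul_one]
    have ex : ∀ x, (eccMatrix T *ᵥ v) x = ∑ y ∈ sideA T a b, eccMatrix T x y * v y
        + ∑ y ∈ sideA T b a, eccMatrix T x y * v y := by
      intro x
      rw [← h.compl, Finset.sum_add_sum_compl]
      rfl
    have exA : ∀ x ∈ sideA T a b, (eccMatrix T *ᵥ v) x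
        = ∑ y ∈ sideA T b a, eccMatrix T x y * v y := by
      intro x hx
      rw [ex, Finset.sum_eq_zero, zero_add]
      intro y hy; rw [h.E_same hx hy, zero_mul]
    have exB : ∀ x ∈ sideA T b a, (eccMatrix T *ᵥ v) x
        = eccMatrix T x a * v a + eccMatrix T x u * v u := by
      intro x hx
      rw [ex, Finset.sum_eq_zero (s := sideA T b a), add_zero, hAe, Finset.sum_pair hua.symm]
      intro y hy; rw [h.swap.E_same hx hy, zero_mul]
    funext x
    rw [Pi.smul_apply, smul_eq_mul]
    rcases h.mem_or x with hx | hx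
    · rw [exA x hx]
      rw [hAe, Finset.mem_insert, Finset.mem_singleton] at hx
      rcases hx with hx | hx
      · rw [(sB x v).1 hx, so, hx, va]; field_simp
      · rw [(sB x v).2 hx, so, hx, vu, vb]; field_simp; ring
    · rw [exB x hx]
      by_cases hxb : x = b
      · rw [hxb, h.swap.E_ab, E_symm, h.E_lb h.mem_u hua, vu, vb]; field_simp; ring
      · rw [h.swap.E_lb hx hxb, E_symm, h.E_ll h.mem_u hua hx hxb, va, vu,
          vo x (Finset.mem_erase.2 ⟨hxb, hx⟩)]
        field_simp
        linear_combination heq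
  · intro y
    have hbip := quad_bip _ (E_symm T) (sideA T a b) (fun x hx y hy => h.E_same hx hy)
      (by rw [h.compl]; exact fun x hx y hy => h.swap.E_same hx hy) y
    rw [h.compl] at hbip
    rw [hbip, hAe, Finset.sum_pair hua.symm, (sB a y).1 rfl, (sB u y).2 rfl]
    have hyy : y ⬝ᵥ y = y a ^ 2 + y u ^ 2 + (y b ^ 2 + ∑ v ∈ (sideA T b a).erase b, y v ^ 2) := by
      have : y ⬝ᵥ y = ∑ x, y x ^ 2 := Finset.sum_congr rfl fun x _ => by ring
      rw [this, ← Finset.sum_add_sum_compl (sideA T a b), h.compl, hAe, Finset.sum_pair hua.symm,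
        ← Finset.add_sum_erase _ _ h.swap.mem_a]
    have hcs := sq_sum_le_card_mul_sum_sq (s := (sideA T b a).erase b) (f := y)
    rw [cB] at hcs
    rw [hyy]
    generalize ∑ v ∈ (sideA T b a).erase b, y v = S at *
    generalize ∑ v ∈ (sideA T b a).erase b, y v ^ 2 = Q at *
    generalize y a = α
    generalize y u = β
    generalize y b = c
    have hz : 0 < σ ^ 2 - 4 := by linarith
    have hbr : 0 ≤ (σ ^ 2 - 4) * σ ^ 2 * Q - 4 * (σ ^ 2 - 4) * S ^ 2 - 9 * σ ^ 2 * S ^ 2 := by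
      have : 0 ≤ q * ((σ ^ 2 - 4) * σ ^ 2 * Q - 4 * (σ ^ 2 - 4) * S ^ 2 - 9 * σ ^ 2 * S ^ 2) := by
        have h1 : 0 ≤ (σ ^ 2 - 4) * σ ^ 2 * (q * Q - S ^ 2) := by
          have : 0 ≤ q * Q - S ^ 2 := by linarith
          positivity
        linear_combination h1 - S ^ 2 * heq
      exact nonneg_of_mul_nonneg_right this hq0
    have hX : 0 ≤ (σ * (σ ^ 2 - 4)) *
        (σ * (α ^ 2 + β ^ 2 + (c ^ 2 + Q)) + 2 * (α * (2 * S) + β * (2 * c + 3 * S))) := by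
      have h1 : 0 ≤ (σ ^ 2 - 4) * (σ * c + 2 * β) ^ 2 := by positivity
      have h2 : 0 ≤ (σ ^ 2 - 4) * (σ * α + 2 * S) ^ 2 := by positivity
      have h3 : 0 ≤ ((σ ^ 2 - 4) * β + 3 * σ * S) ^ 2 := by positivity
      linear_combination h1 + h2 + h3 + hbr
    have := nonneg_of_mul_nonneg_right hX (by positivity)
    linarith

end

/-! ### The extremal tree -/

/-- Adjacency of the tree `T_{n,3}^{0,n-4}`. -/
def IsExt {V : Type*} (G : SimpleGraph V) (u a b : V) : Prop :=
  u ≠ a ∧ u ≠ b ∧ a ≠ b ∧ ∀ x y, G.Adj x y ↔ x ≠ y ∧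
    ((x = u ∧ y = a) ∨ (x = a ∧ y = u) ∨ (x = b ∧ y ≠ u) ∨ (y = b ∧ x ≠ u))

lemma isExt_Tndab (m : ℕ) :
    IsExt (Tndab 3 0 m) (Sum.inl 0) (Sum.inl 1) (Sum.inl 2) := by
  refine ⟨by simp, by simp, by simp, ?_⟩
  have hp : ∀ i j : Fin 4, (∃ k : Fin 3, i = k.castSucc ∧ j = k.succ) ↔
      (i = 0 ∧ j = 1 ∨ i = 1 ∧ j = 2 ∨ i = 2 ∧ j = 3) := by decide
  have h2 : (⟨2, by omega⟩ : Fin 4) = 2 := rfl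
  rintro (i | i | i) (j | j | j)
  · simp [Tndab, hp]
    revert i j; decide
  · exact j.elim0
  · simp [Tndab, h2]
  · exact i.elim0
  · exact i.elim0
  · exact i.elim0
  · simp [Tndab, h2]
  · exact j.elim0
  · simp [Tndab]

lemma IsExt.map {V W : Type*} {G : SimpleGraph V} {H : SimpleGraph W} (e : G ≃g H) {u a b : W}
    (h : IsExt H u a b) : IsExt G (e.symm u) (e.symm a) (e.symm b) := by
  obtain ⟨h1, h2, h3, h4⟩ := h
  refine ⟨by simpa using h1, by simpa using h2, by simpa using h3, fun x y => ?_⟩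
  rw [← e.map_adj_iff, h4]
  have : ∀ (z : V) (t : W), z = e.symm t ↔ e z = t := fun z t => by
    constructor
    · rintro rfl; simp
    · rintro rfl; simp
  simp only [ne_eq, this, EmbeddingLike.apply_eq_iff_eq]

lemma IsExt.iso {V W : Type*} [Fintype V] [Fintype W] {G : SimpleGraph V} {H : SimpleGraph W}
    {u a b : V} {u' a' b' : W} (h : IsExt G u a b) (h' : IsExt H u' a' b')
    (hc : Fintype.card V = Fintype.card W) : Nonempty (G ≃g H) := by
  classical
  obtain ⟨h1, h2, h3, h4⟩ := h
  obtain ⟨k1, k2, k3, k4⟩ := h'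
  obtain ⟨g, hg⟩ := Finset.exists_equiv_extend_of_card_eq (α := V) (β := W) (t := Finset.univ)
    (by rw [hc, Finset.card_univ]) (s := {u, a, b})
    (f := fun x => if x = u then u' else if x = a then a' else b') (Finset.subset_univ _) (by
      intro x hx y hy hxy
      simp only [Finset.coe_insert, Finset.coe_singleton, Set.mem_insert_iff,
        Set.mem_singleton_iff] at hx hy
      rcases hx with rfl | rfl | rfl <;> rcases hy with rfl | rfl | rfl <;>
        simp_all [eq_comm])
  let e : V ≃ W := g.trans (Equiv.subtypeUnivEquiv (fun x => Finset.mem_univ x))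
  have eu : e u = u' := by
    have := hg u (by simp); simpa [e] using this
  have ea : e a = a' := by
    have := hg a (by simp); simpa [e, h1.symm] using this
  have eb : e b = b' := by
    have := hg b (by simp); simpa [e, h2.symm, h3.symm] using this
  refine ⟨⟨e, ?_⟩⟩
  intro x y
  rw [k4, h4, ← eu, ← ea, ← eb]
  simp only [ne_eq, EmbeddingLike.apply_eq_iff_eq]

section
variable {V : Type*} [Fintype V] [DecidableEq V] {T : SimpleGraph V} {a b u w : V} {r : ℕ}

lemma IsExt.ctr (hT : T.IsTree) (h : IsExt T u a b) (h4 : 4 ≤ Fintype.card V) :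
    ∃ w, Ctr T a b u w 1 ∧ (sideA T a b).card = 2 := by
  obtain ⟨h1, h2, h3, hadj⟩ := h
  have : ∃ w, w ∉ ({u, a, b} : Finset V) := by
    by_contra hc
    push Not at hc
    have : (Finset.univ : Finset V) ⊆ {u, a, b} := fun x _ => hc x
    have := Finset.card_le_card this
    have := Finset.card_le_three (a := u) (b := a) (c := b)
    rw [Finset.card_univ] at *
    omega
  obtain ⟨w, hw⟩ := this
  simp only [Finset.mem_insert, Finset.mem_singleton, not_or] at hw
  obtain ⟨w1, w2, w3⟩ := hw
  have hab : T.Adj a b := by rw [hadj]; exact ⟨h3, by right; right; right; exact ⟨rfl, h1.symm⟩⟩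
  have hua : T.dist u a = 1 := by rw [dist_eq_one_iff_adj, hadj]; simp [h1]
  have ho : ∀ x, x ≠ u → x ≠ b → T.dist x b = 1 := by
    intro x hx hxb; rw [dist_eq_one_iff_adj, hadj]; simp [hx, hxb]
  have hz : ∀ x y, T.dist x y = 0 → x = y := fun x y => hT.connected.dist_eq_zero_iff.1
  have hub : T.dist u b = 2 := by
    have := tree_dist_cases hT hab u
    have := mt (hz u b) h2
    omega
  have hoa : ∀ x, x ≠ u → x ≠ a → x ≠ b → T.dist x a = 2 := by
    intro x hx hxa hxb
    have := tree_dist_cases hT hab x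
    have := mt (hz x a) hxa
    have := ho x hx hxb
    omega
  have dab : T.dist a b = 1 := dist_eq_one_iff_adj.2 hab
  have dba : T.dist b a = 1 := dist_eq_one_iff_adj.2 hab.symm
  refine ⟨w, ⟨hT, hab, hua, hub, ho w w1 w3, hoa w w1 w2 w3, fun x => ?_⟩, ?_⟩
  · by_cases hx : x = u
    · subst hx; omega
    by_cases hxa : x = a
    · subst hxa; rw [dist_self]; omega
    by_cases hxb : x = b
    · subst hxb; rw [dist_self]; omega
    have := ho x hx hxb
    have := hoa x hx hxa hxb
    omega
  · have : sideA T a b = {a, u} := by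
      ext x
      rw [mem_sideA, Finset.mem_insert, Finset.mem_singleton]
      by_cases hx : x = u
      · subst hx; simp [hua, hub]
      by_cases hxa : x = a
      · subst hxa; simp [dab]
      by_cases hxb : x = b
      · subst hxb; simp [dba, hx, hxa]
      simp [hx, hxa, ho x hx hxb, hoa x hx hxa hxb]
    rw [this, Finset.card_pair h1.symm]

lemma Ctr.isExt (h : Ctr T a b u w 1) (hA : (sideA T a b).card = 2) : IsExt T u a b := by
  have hua : u ≠ a := by
    rintro rfl
    have := h.hu
    rw [dist_self] at this
    omega
  have hub : u ≠ b := by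
    rintro rfl
    have := h.hu'
    rw [dist_self] at this
    omega
  have hAe : sideA T a b = {a, u} := by
    symm
    apply Finset.eq_of_subset_of_card_le
    · intro x hx
      simp only [Finset.mem_insert, Finset.mem_singleton] at hx
      rcases hx with rfl | rfl
      · exact h.mem_a
      · exact h.mem_u
    · rw [hA, Finset.card_pair hua.symm]
  have hab : a ≠ b := h.adj.ne
  have hmB : ∀ x, x ≠ a → x ≠ u → x ∈ sideA T b a := by
    intro x h1 h2
    rw [← h.compl, hAe]
    simp [h1, h2]
  have Aua : T.Adj u a := dist_eq_one_iff_adj.1 h.hu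
  have Aob : ∀ x, x ≠ u → x ≠ b → T.Adj x b := by
    intro x hx hxb
    by_cases hxa : x = a
    · rw [hxa]; exact h.adj
    · exact dist_eq_one_iff_adj.1 (h.swap.dist_one (hmB x hxa hx) hxb)
  -- non-adjacency
  have Nu : ∀ y, y ≠ a → y ≠ u → ¬ T.Adj u y := by
    intro y hya hyu hc
    have := h.across h.mem_u (hmB y hya hyu)
    rw [dist_eq_one_iff_adj.2 hc, h.hu] at this
    omega
  have Na : ∀ y, y ≠ u → y ≠ b → ¬ T.Adj a y := by
    intro y hyu hyb hc
    have hya : y ≠ a := hc.ne'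
    have := h.across h.mem_a (hmB y hya hyu)
    rw [dist_eq_one_iff_adj.2 hc, h.swap.dist_one (hmB y hya hyu) hyb] at this
    omega
  have No : ∀ x y, x ≠ u → x ≠ b → y ≠ u → y ≠ b → ¬ T.Adj x y := by
    intro x y hx hxb hy hyb hc
    have h1 : T.dist b x = 1 := by rw [dist_comm, dist_eq_one_iff_adj]; exact Aob x hx hxb
    have h2 : T.dist b y = 1 := by rw [dist_comm, dist_eq_one_iff_adj]; exact Aob y hy hyb
    exact h.tree.dist_ne_of_adj b hc (by rw [h1, h2])
  refine ⟨hua, hub, hab, fun x y => ?_⟩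
  constructor
  · intro hc
    refine ⟨hc.ne, ?_⟩
    by_contra hn
    by_cases hxu : x = u
    · subst hxu
      have := Nu y (by tauto) hc.ne'
      exact this hc
    by_cases hyu : y = u
    · subst hyu
      have := Nu x (by tauto) hc.ne
      exact this hc.symm
    exact No x y hxu (by tauto) hyu (by tauto) hc
  · rintro ⟨hne, ⟨rfl, rfl⟩ | ⟨rfl, rfl⟩ | ⟨rfl, hy⟩ | ⟨rfl, hy⟩⟩
    · exact Aua
    · exact Aua.symm
    · exact (Aob y hy hne.symm).symm
    · exact Aob x hy hne

lemma Ctr.value (h : Ctr T a b u w 1) (hA : (sideA T a b).card = 2) {n : ℕ}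
    (hn : Fintype.card V = n) (h4 : 4 ≤ n) : minEig (eccMatrix T) =
      -Real.sqrt ((13*(n:ℝ) - 35 + Real.sqrt ((13*(n:ℝ) - 35)^2 - 64*((n:ℝ) - 3)))/2) := by
  have h4' : (4 : ℝ) ≤ n := by exact_mod_cast h4
  have hcard : ((sideA T a b).card : ℝ) + (sideA T b a).card = n := by
    rw [← hn]; exact_mod_cast h.card
  rw [hA] at hcard
  push_cast at hcard
  have hD : 0 ≤ (13*(n:ℝ) - 35)^2 - 64*((n:ℝ) - 3) := by nlinarith
  set R := Real.sqrt ((13*(n:ℝ) - 35)^2 - 64*((n:ℝ) - 3)) with hR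
  have hR2 : R ^ 2 = (13*(n:ℝ) - 35)^2 - 64*((n:ℝ) - 3) := Real.sq_sqrt hD
  have hR0 : 0 ≤ R := Real.sqrt_nonneg _
  have hz : 0 < (13*(n:ℝ) - 35 + R)/2 := by linarith
  have hσ2 := Real.sq_sqrt hz.le
  refine h.case_eq (q := n - 3) hA (by linarith) (by linarith) (Real.sqrt_pos.2 hz) ?_ ?_
  · rw [hσ2]; linarith
  · rw [hσ2]; linear_combination hR2 / 4

lemma Ctr.main (h : Ctr T a b u w r) {n : ℕ}
    (hn : Fintype.card V = n) (h4 : 4 ≤ n) (h15 : n ≤ 15) :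
    minEig (eccMatrix T) < -Real.sqrt (13 * n - 35) ∨ ∃ u a b, IsExt T u a b := by
  rcases Nat.lt_or_ge r 2 with hr | hr
  · have hr1 : r = 1 := by
      by_contra hc
      have h0 : r = 0 := by omega
      subst h0
      have : (Finset.univ : Finset V) ⊆ {a, b} := by
        intro x _
        rw [Finset.mem_insert, Finset.mem_singleton]
        rcases h.all x with hx | hx
        · left; exact h.tree.connected.dist_eq_zero_iff.1 (by omega)
        · right; exact h.tree.connected.dist_eq_zero_iff.1 (by omega)
      have := Finset.card_le_card this
      have := Finset.card_le_two (a := a) (b := b)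
      rw [Finset.card_univ] at *
      omega
    subst hr1
    have two : ∀ {a b u w : V}, Ctr T a b u w 1 → 2 ≤ (sideA T a b).card := by
      intro a b u w h
      have hua : u ≠ a := by
        rintro rfl
        have := h.hu
        rw [dist_self] at this
        omega
      rw [← Finset.card_pair hua]
      apply Finset.card_le_card
      intro x hx
      simp only [Finset.mem_insert, Finset.mem_singleton] at hx
      rcases hx with rfl | rfl
      · exact h.mem_u
      · exact h.mem_a
    have tA := two h
    have tB := two h.swap
    by_cases hA : (sideA T a b).card = 2
    · exact Or.inr ⟨_, _, _, h.isExt hA⟩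
    by_cases hB : (sideA T b a).card = 2
    · exact Or.inr ⟨_, _, _, h.swap.isExt hB⟩
    left
    rcases le_total (sideA T b a).card (sideA T a b).card with hl | hl
    · exact h.case_mid hn (by omega) hl
    · exact h.swap.case_mid hn (by omega) hl
  · exact Or.inl (h.case_big hr hn h4 h15)

end

/-- Upper bound on the least eccentricity eigenvalue of a tree on `4 ≤ n ≤ 15` vertices with
odd diameter, with equality iff `T ≅ T_{n,3}^{0,n-4}`. -/
theorem stmt7 {V : Type*} [Fintype V] [DecidableEq V] (T : SimpleGraph V) (n : ℕ)
    (hT : T.IsTree) (hn : Fintype.card V = n) (h4 : 4 ≤ n) (h15 : n ≤ 15)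
    (hodd : Odd (gdiam T)) :
    minEig (eccMatrix T) ≤
      -Real.sqrt ((13*(n:ℝ) - 35 + Real.sqrt ((13*(n:ℝ) - 35)^2 - 64*((n:ℝ) - 3)))/2) ∧
    (minEig (eccMatrix T) =
        -Real.sqrt ((13*(n:ℝ) - 35 + Real.sqrt ((13*(n:ℝ) - 35)^2 - 64*((n:ℝ) - 3)))/2) ↔
      Nonempty (T ≃g Tndab 3 0 (n-4))) := by
  have h4' : (4 : ℝ) ≤ n := by exact_mod_cast h4
  have hval : ∀ u a b, IsExt T u a b → minEig (eccMatrix T) =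
      -Real.sqrt ((13*(n:ℝ) - 35 + Real.sqrt ((13*(n:ℝ) - 35)^2 - 64*((n:ℝ) - 3)))/2) := by
    intro u a b hE
    obtain ⟨w, hc, hA⟩ := hE.ctr hT (by omega)
    exact hc.value hA hn h4
  have hlt : -Real.sqrt (13 * n - 35) ≤
      -Real.sqrt ((13*(n:ℝ) - 35 + Real.sqrt ((13*(n:ℝ) - 35)^2 - 64*((n:ℝ) - 3)))/2) := by
    apply neg_le_neg
    apply Real.sqrt_le_sqrt
    have : Real.sqrt ((13*(n:ℝ) - 35)^2 - 64*((n:ℝ) - 3)) ≤ 13 * n - 35 := by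
      rw [Real.sqrt_le_left (by linarith)]
      linarith
    linarith
  obtain ⟨a, b, u, w, r, hc⟩ := exists_ctr hT hodd
  rcases hc.main hn h4 h15 with h | ⟨u, a, b, hE⟩
  · have h' := lt_of_lt_of_le h hlt
    refine ⟨h'.le, fun he => absurd he h'.ne, ?_⟩
    rintro ⟨e⟩
    exact hval _ _ _ ((isExt_Tndab (n - 4)).map e)
  · refine ⟨(hval _ _ _ hE).le, fun _ => ?_, fun _ => hval _ _ _ hE⟩
    refine hE.iso (isExt_Tndab (n - 4)) ?_
    simp only [Fintype.card_sum, Fintype.card_fin]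
    omega
end
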